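/- Suppose L is a metric flag labeled triangulation of the 2-sphere. Let D₁ and D₂ be Seifert subcomplexes of L, and let C₁ ⊆ D₁ and C₂ ⊆ D₂ be Euclidean 4-circuits each of whose edges lies in at most one 2-simplex of the containing Seifert subcomplex (boundary 4-circuits). If C₁ and C₂ have two edges in common which share a vertex, then D₁ = D₂. -/

import Mathlib

open Geometry

/-- The ambient space for our simplicial complexes. -/
abbrev E3 : Type := EuclideanSpace ℝ (Fin 3)

noncomputable instance : DecidableEq E3 := Classical.decEq _

namespace CoxOrb

variable (L : SimplicialComplex ℝ E3) (m : E3 → E3 → ℕ)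

/-- `L` is a labeled triangulation of the 2-sphere with edge labeling `m`:
`L` is finite, its underlying space is homeomorphic to the 2-sphere, and `m`
is symmetric with `m s t ≥ 2` on every edge `{s, t}` of `L`. -/
structure IsLabeledS2 : Prop where
  finite : L.faces.Finite
  sphere : Nonempty (L.space ≃ₜ (Metric.sphere (0 : E3) 1 : Set E3))
  symm : ∀ s t : E3, m s t = m t s
  two_le : ∀ s t : E3, s ≠ t → ({s, t} : Finset E3) ∈ L.faces → 2 ≤ m s t

/-- `L` with labeling `m` is metric flag: three pairwise-joined vertices span a
2-simplex iff the corresponding angle sum `π/m_st + π/m_tu + π/m_us` exceeds `π`. -/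
def MetricFlag : Prop :=
  ∀ s t u : E3, s ≠ t → t ≠ u → s ≠ u →
    ({s, t} : Finset E3) ∈ L.faces → ({t, u} : Finset E3) ∈ L.faces →
    ({s, u} : Finset E3) ∈ L.faces →
    (({s, t, u} : Finset E3) ∈ L.faces ↔
      1 / (m s t : ℝ) + 1 / (m t u : ℝ) + 1 / (m u s : ℝ) > 1)

/-- The link of a vertex `s`, as a set of faces of `L`. -/
def link (s : E3) : Set (Finset E3) :=
  {F | F ∈ L.faces ∧ s ∉ F ∧ insert s F ∈ L.faces}

/-- The closed star of a vertex `s`: all faces of `L` contained in some face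
containing `s`. -/
def star (s : E3) : Set (Finset E3) :=
  {F | F ∈ L.faces ∧ ∃ G ∈ L.faces, s ∈ G ∧ F ⊆ G}

/-- The vertices of the link of `s`. -/
def linkVerts (s : E3) : Set E3 :=
  {v | v ≠ s ∧ ({s, v} : Finset E3) ∈ L.faces}

/-- A set of faces `A` is a full subcomplex of `L`: every face of `L` all of
whose vertices are vertices of `A` belongs to `A`. -/
def IsFullSubcomplex (A : Set (Finset E3)) : Prop :=
  A ⊆ L.faces ∧ ∀ F ∈ L.faces, (∀ v ∈ F, ({v} : Finset E3) ∈ A) → F ∈ A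

/-- `s` is a 3-Euclidean vertex of `L`: it has valence three and the labels on
the three edges of its link have reciprocals summing to one. -/
def IsThreeEuclidean (s : E3) : Prop :=
  ({s} : Finset E3) ∈ L.faces ∧
  ∃ s₀ s₁ s₂ : E3, s₀ ≠ s₁ ∧ s₁ ≠ s₂ ∧ s₀ ≠ s₂ ∧
    linkVerts L s = {s₀, s₁, s₂} ∧
    1 / (m s₀ s₁ : ℝ) + 1 / (m s₁ s₂ : ℝ) + 1 / (m s₂ s₀ : ℝ) = 1

/-- `s` is a 4-Euclidean vertex of `L`: it has valence four, its link is the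
4-circuit on `v 0, v 1, v 2, v 3` (in cyclic order), and the labels on the
edges of the link are all `2`. -/
def IsFourEuclidean (s : E3) : Prop :=
  ({s} : Finset E3) ∈ L.faces ∧
  ∃ v : Fin 4 → E3, Function.Injective v ∧
    linkVerts L s = {v 0, v 1, v 2, v 3} ∧
    (∀ i : Fin 4, ({s, v i, v (i + 1)} : Finset E3) ∈ L.faces) ∧
    (∀ i : Fin 4, m (v i) (v (i + 1)) = 2)

/-- `L` is the boundary complex of a 3-simplex: four pairwise-joined vertices
spanning four 2-simplices. -/
def IsBoundaryOfThreeSimplex : Prop :=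
  ∃ a b c d : E3, a ≠ b ∧ a ≠ c ∧ a ≠ d ∧ b ≠ c ∧ b ≠ d ∧ c ≠ d ∧
    (∀ v : E3, ({v} : Finset E3) ∈ L.faces ↔ v = a ∨ v = b ∨ v = c ∨ v = d) ∧
    ({a, b, c} : Finset E3) ∈ L.faces ∧ ({a, b, d} : Finset E3) ∈ L.faces ∧
    ({a, c, d} : Finset E3) ∈ L.faces ∧ ({b, c, d} : Finset E3) ∈ L.faces

/-- `L` is the suspension of a 3-gon. -/
def IsSuspensionOfThreeGon : Prop :=
  ∃ t t' s₀ s₁ s₂ : E3, [t, t', s₀, s₁, s₂].Pairwise (· ≠ ·) ∧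
    (∀ v : E3, ({v} : Finset E3) ∈ L.faces ↔ v = t ∨ v = t' ∨ v = s₀ ∨ v = s₁ ∨ v = s₂) ∧
    ({s₀, s₁} : Finset E3) ∈ L.faces ∧ ({s₁, s₂} : Finset E3) ∈ L.faces ∧
    ({s₀, s₂} : Finset E3) ∈ L.faces ∧
    ({t, s₀} : Finset E3) ∈ L.faces ∧ ({t, s₁} : Finset E3) ∈ L.faces ∧
    ({t, s₂} : Finset E3) ∈ L.faces ∧
    ({t', s₀} : Finset E3) ∈ L.faces ∧ ({t', s₁} : Finset E3) ∈ L.faces ∧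
    ({t', s₂} : Finset E3) ∈ L.faces ∧
    ({t, t'} : Finset E3) ∉ L.faces

/-- The simplicial join of the subcomplex `Z` with the two points `t, t'`. -/
def joinSusp (Z : Set (Finset E3)) (t t' : E3) : Set (Finset E3) :=
  Z ∪ {{t}, {t'}} ∪ ((fun F => insert t F) '' Z) ∪ ((fun F => insert t' F) '' Z)

/-- `T` is the right-angled suspension in `L` of the subcomplex `Z` with
suspension points `t, t'` (not joined by an edge of `T`): every edge from a
suspension point to a vertex of `Z` is labeled `2`. -/
structure IsRASuspData (T Z : Set (Finset E3)) (t t' : E3) : Prop where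
  subset : T ⊆ L.faces
  zsubset : Z ⊆ L.faces
  zdown : ∀ F ∈ Z, ∀ G : Finset E3, G ⊆ F → G.Nonempty → G ∈ Z
  znonempty : Z.Nonempty
  tne : t ≠ t'
  t_notin : ∀ F ∈ Z, t ∉ F
  t'_notin : ∀ F ∈ Z, t' ∉ F
  labels : ∀ v : E3, ({v} : Finset E3) ∈ Z → m t v = 2 ∧ m t' v = 2
  eq : T = joinSusp Z t t'

/-- `T` is a right-angled suspension in `L`. -/
def IsRASusp (T : Set (Finset E3)) : Prop :=
  ∃ Z t t', IsRASuspData L m T Z t t'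

/-- The base `Z` of the suspension is neither a single vertex nor a single
edge, so that the suspension is infinite. -/
def InfiniteBase (Z : Set (Finset E3)) : Prop :=
  (¬ ∃ v : E3, Z = {({v} : Finset E3)}) ∧
  (¬ ∃ u v : E3, u ≠ v ∧ Z = {({u} : Finset E3), ({v} : Finset E3), ({u, v} : Finset E3)})

/-- `T` is an infinite, maximal right-angled suspension in `L`: it is an
RA-suspension of a full subcomplex which is neither a vertex nor an edge, and
`T` is not properly contained in another RA-suspension. -/
def IsInfMaxRASusp (T : Set (Finset E3)) : Prop :=
  (∃ Z t t', IsRASuspData L m T Z t t' ∧ InfiniteBase Z ∧ IsFullSubcomplex L Z) ∧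
  ∀ T', IsRASusp L m T' → T ⊆ T' → T = T'

/-- `v 0, v 1, v 2, v 3` (in cyclic order) form a Euclidean 4-circuit of `L`:
all four edge labels are `2` and the circuit is not the boundary of the union
of two 2-simplices of `L` sharing an edge. -/
def IsEuclidean4Circuit (v : Fin 4 → E3) : Prop :=
  Function.Injective v ∧
  (∀ i : Fin 4, ({v i, v (i + 1)} : Finset E3) ∈ L.faces) ∧
  (∀ i : Fin 4, m (v i) (v (i + 1)) = 2) ∧
  ¬ ((({v 0, v 1, v 2} : Finset E3) ∈ L.faces ∧ ({v 0, v 2, v 3} : Finset E3) ∈ L.faces) ∨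
     (({v 1, v 2, v 3} : Finset E3) ∈ L.faces ∧ ({v 0, v 1, v 3} : Finset E3) ∈ L.faces))

/-- The subcomplex consisting of the vertices and edges of the 4-circuit `v`. -/
def circuitComplex (v : Fin 4 → E3) : Set (Finset E3) :=
  {F | (∃ i : Fin 4, F = {v i}) ∨ (∃ i : Fin 4, F = {v i, v (i + 1)})}

/-- `T` is the right-angled cone on a Euclidean 4-circuit: the closed star of a
vertex `c` of valence four whose link is a Euclidean 4-circuit, all four edges
containing `c` being labeled `2`. -/
def IsRAConeOn4Circuit (T : Set (Finset E3)) : Prop :=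
  ∃ (c : E3) (v : Fin 4 → E3), IsEuclidean4Circuit L m v ∧
    linkVerts L c = {v 0, v 1, v 2, v 3} ∧
    (∀ i : Fin 4, ({c, v i, v (i + 1)} : Finset E3) ∈ L.faces) ∧
    (∀ i : Fin 4, m c (v i) = 2) ∧
    T = star L c

/-- The generating relation for Seifert subcomplexes: two infinite, maximal
RA-suspensions whose intersection is a Euclidean 4-circuit. -/
def SeifertRel (S S' : Set (Finset E3)) : Prop :=
  IsInfMaxRASusp L m S ∧ IsInfMaxRASusp L m S' ∧
  ∃ v : Fin 4 → E3, IsEuclidean4Circuit L m v ∧ S ∩ S' = circuitComplex v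

/-- `D` is a Seifert subcomplex of `L`: the union of the members of an
equivalence class of infinite, maximal RA-suspensions under the equivalence
relation generated by `SeifertRel`. -/
def IsSeifertSubcomplex (D : Set (Finset E3)) : Prop :=
  ∃ S₀, IsInfMaxRASusp L m S₀ ∧
    D = ⋃₀ {S | IsInfMaxRASusp L m S ∧ Relation.EqvGen (SeifertRel L m) S₀ S}

end CoxOrb

open CoxOrb

/-!
The 1-skeleton of a triangulated sphere contains no subdivision of `K₅` or `K₃,₃`. This rests on
van Kampen's parity argument: when a graph in which all the relevant degrees are even is drawn in
the plane without crossings of vertex-disjoint edges, winding numbers show that the number of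
crossing chords in a convex drawing is even as well. Planarity is only needed in this form.

An infinite maximal RA-suspension containing a Euclidean 4-circuit `abcd` must have a pair of
opposite vertices of the circuit as its suspension points, together with all their common
neighbours along edges labelled `2`. The two possible suspensions, on `{a, c}` and on `{b, d}`, are
equal or meet exactly in the circuit, so they lie in the same class. Conversely, if the vertices of
`abcd` lie in a Seifert subcomplex then one of the two suspensions belongs to its class: walk
through the class, and observe that the circuit in which two consecutive suspensions meet separates
the sphere, while `abcd` cannot have vertices strictly on both sides of it.

Finally let two circuits share the edges `ab` and `bc`, so that they are `abcd` and `abcd'`. If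
`d = d'`, the classes agree by the above. Otherwise `b, d, d'` are common neighbours of `a` and `c`,
so the suspension on `{a, c}` is infinite and maximal, and it links both classes.
-/

/-! ### Plane drawings and van Kampen's obstruction -/

section ContinuousLog

theorem exists_continuous_log {X : Type*} [TopologicalSpace X] [SimplyConnectedSpace X]
    [LocallyPathConnectedSpace X] {f : X → ℂ} (hf : Continuous f) (hf₀ : ∀ x, f x ≠ 0) :
    ∃ g : X → ℂ, Continuous g ∧ ∀ x, Complex.exp (g x) = f x := by
  obtain ⟨x₀⟩ : Nonempty X := inferInstance
  obtain ⟨F, ⟨-, hF⟩, -⟩ := Complex.isCoveringMapOn_exp.existsUnique_continuousMap_lifts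
    ⟨f, hf⟩ (Complex.exp_log (hf₀ x₀)) hf₀
  exact ⟨F, F.continuous, fun x => congrFun hF x⟩

theorem sub_eq_sub_of_exp_eq_const_mul_exp {X : Type*} [TopologicalSpace X] [PreconnectedSpace X]
    {g₁ g₂ : X → ℂ} (hg₁ : Continuous g₁) (hg₂ : Continuous g₂) {c : ℂ}
    (h : ∀ x, Complex.exp (g₁ x) = c * Complex.exp (g₂ x)) (x y : X) :
    g₁ x - g₁ y = g₂ x - g₂ y := by
  have hcomp : (fun z : ℂ => (⟨_, z.exp_ne_zero⟩ : {z : ℂ // z ≠ 0})) ∘ g₁ =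
      (fun z : ℂ => ⟨_, z.exp_ne_zero⟩) ∘ fun x => g₂ x + (g₁ y - g₂ y) := by
    ext x
    simp only [Function.comp_apply, Complex.exp_add, Complex.exp_sub, h]
    field_simp [Complex.exp_ne_zero]
  have hshift := congrFun (Complex.isCoveringMap_exp.eq_of_comp_eq hg₁ (by fun_prop) hcomp y
    (by ring)) x
  linear_combination hshift

theorem exists_log_increment {p : ℝ → ℂ} (hp : Continuous p) (hp₀ : ∀ s, p s ≠ 0) :
    ∃ δ : ℂ, Complex.exp δ = p 1 / p 0 ∧ ∀ g : ℝ → ℂ, Continuous g → ∀ c : ℂ,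
      (∀ s, Complex.exp (g s) = c * p s) → g 1 - g 0 = δ := by
  obtain ⟨g₀, hg₀, hexp⟩ := exists_continuous_log hp hp₀
  refine ⟨g₀ 1 - g₀ 0, by rw [Complex.exp_sub, hexp, hexp], fun g hg c hc => ?_⟩
  exact sub_eq_sub_of_exp_eq_const_mul_exp hg hg₀ (c := c) (fun s => by rw [hc, hexp]) 1 0

theorem exists_log_sub_branch {V : Type*} [LinearOrder V] {P : V → ℂ} (hP : Function.Injective P) :
    ∃ l : V → V → ℂ, (∀ u v, u ≠ v → Complex.exp (l u v) = P u - P v) ∧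
      ∀ u v, u < v → l v u = l u v + Real.pi * Complex.I := by
  refine ⟨fun u v => if u < v then Complex.log (P u - P v) else
    Complex.log (P v - P u) + Real.pi * Complex.I, fun u v huv => ?_, fun u v huv => ?_⟩
  · dsimp only
    split_ifs
    · exact Complex.exp_log (sub_ne_zero.2 (hP.ne huv))
    · rw [Complex.exp_add, Complex.exp_log (sub_ne_zero.2 (hP.ne huv.symm)), Complex.exp_pi_mul_I]
      ring
  · simp only [huv, huv.not_gt, if_true, if_false]

end ContinuousLog

/-- Drawings of a graph in the plane in which vertex-disjoint edges do not meet. Edges with a common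
endpoint may cross, since van Kampen's obstruction does not see such crossings, and the two
orientations of an edge need not carry the same arc. -/
structure PlaneDrawing {V : Type*} (G : SimpleGraph V) where
  point : V → ℂ
  point_injective : Function.Injective point
  arc {a b : V} : G.Adj a b → Path (point a) (point b)
  disjoint_arc {a b c d : V} (hab : G.Adj a b) (hcd : G.Adj c d) :
    Disjoint ({a, b} : Set V) {c, d} → Disjoint (Set.range (arc hab)) (Set.range (arc hcd))

namespace PlaneDrawing

variable {V : Type*} {G : SimpleGraph V}

theorem exists_log_increments (D : PlaneDrawing G) :
    ∃ δ : V → V → V → ℂ,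
      (∀ v a b (hab : G.Adj a b), D.point v ∉ Set.range (D.arc hab) →
        Complex.exp (δ v a b) = (D.point b - D.point v) / (D.point a - D.point v)) ∧
      ∀ a b c d, G.Adj a b → G.Adj c d → Disjoint ({a, b} : Set V) {c, d} →
        δ c a b - δ d a b + δ b c d - δ a c d = 0 := by
  have hδ : ∀ v a b, ∃ δ : ℂ, ∀ hab : G.Adj a b, D.point v ∉ Set.range (D.arc hab) →
      Complex.exp δ = (D.point b - D.point v) / (D.point a - D.point v) ∧
      ∀ g : ℝ → ℂ, Continuous g → ∀ c : ℂ,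
        (∀ s, Complex.exp (g s) = c * ((D.arc hab).extend s - D.point v)) → g 1 - g 0 = δ := by
    intro v a b
    by_cases h : ∃ hab : G.Adj a b, D.point v ∉ Set.range (D.arc hab)
    · obtain ⟨hab, hv⟩ := h
      rw [← Path.extend_range] at hv
      obtain ⟨δ, hexp, hinc⟩ := exists_log_increment
        (p := fun s => (D.arc hab).extend s - D.point v) (by fun_prop)
        (fun s hs => hv ⟨s, sub_eq_zero.1 hs⟩)
      exact ⟨δ, fun _ _ => ⟨by simpa using hexp, hinc⟩⟩
    · exact ⟨0, fun hab hv => (h ⟨hab, hv⟩).elim⟩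
  choose δ hδ using hδ
  refine ⟨δ, fun v a b hab hv => (hδ v a b hab hv).1, fun a b c d hab hcd hdisj => ?_⟩
  have harc := Set.disjoint_left.1 (D.disjoint_arc hab hcd hdisj)
  obtain ⟨g, hg, hexp⟩ := exists_continuous_log
    (f := fun x : ℝ × ℝ => (D.arc hab).extend x.1 - (D.arc hcd).extend x.2) (by fun_prop)
    fun x hx => by
      rw [← Path.extend_range, ← Path.extend_range] at harc
      exact harc ⟨x.1, rfl⟩ ⟨x.2, (sub_eq_zero.1 hx).symm⟩
  have bottom := (hδ c a b hab fun h => harc h ⟨0, Path.source _⟩).2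
    (fun s => g (s, 0)) (by fun_prop) 1 fun s => by simp [hexp]
  have top := (hδ d a b hab fun h => harc h ⟨1, Path.target _⟩).2
    (fun s => g (s, 1)) (by fun_prop) 1 fun s => by simp [hexp]
  have left := (hδ a c d hcd (harc ⟨0, Path.source _⟩)).2
    (fun s => g (0, s)) (by fun_prop) (-1) fun s => by simp [hexp]
  have right := (hδ b c d hcd (harc ⟨1, Path.target _⟩)).2
    (fun s => g (1, s)) (by fun_prop) (-1) fun s => by simp [hexp]
  linear_combination -bottom + top - right + left

theorem exists_winding (D : PlaneDrawing G) {l : V → V → ℂ}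
    (hl : ∀ u v, u ≠ v → Complex.exp (l u v) = D.point u - D.point v) :
    ∃ ν : V → V → V → ℤ, ∀ a b c d, G.Adj a b → G.Adj c d → Disjoint ({a, b} : Set V) {c, d} →
      (l a c - l c a) + (l b d - l d b) + (l d a - l a d) + (l c b - l b c) =
        (ν c a b - ν d a b + ν b c d - ν a c d : ℤ) * (2 * Real.pi * Complex.I) := by
  obtain ⟨δ, hexp, hsum⟩ := D.exists_log_increments
  have hν : ∀ v a b, ∃ ν : ℤ, ∀ hab : G.Adj a b, D.point v ∉ Set.range (D.arc hab) →
      δ v a b = l b v - l a v + ν * (2 * Real.pi * Complex.I) := by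
    intro v a b
    by_cases h : ∃ hab : G.Adj a b, D.point v ∉ Set.range (D.arc hab)
    · obtain ⟨hab, hv⟩ := h
      have hav : a ≠ v := fun h => hv ⟨0, by simp [h]⟩
      have hbv : b ≠ v := fun h => hv ⟨1, by simp [h]⟩
      obtain ⟨ν, hν⟩ := Complex.exp_eq_exp_iff_exists_int.1
        (show Complex.exp (δ v a b) = Complex.exp (l b v - l a v) by
          rw [Complex.exp_sub, hl _ _ hav, hl _ _ hbv, hexp v a b hab hv])
      exact ⟨ν, fun _ _ => hν⟩
    · exact ⟨0, fun hab hv => (h ⟨hab, hv⟩).elim⟩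
  choose ν hν using hν
  refine ⟨ν, fun a b c d hab hcd hdisj => ?_⟩
  have harc := Set.disjoint_left.1 (D.disjoint_arc hab hcd hdisj)
  have hc := hν c a b hab fun h => harc h ⟨0, Path.source _⟩
  have hd := hν d a b hab fun h => harc h ⟨1, Path.target _⟩
  have ha := hν a c d hcd (harc ⟨0, Path.source _⟩)
  have hb := hν b c d hcd (harc ⟨1, Path.target _⟩)
  push_cast
  linear_combination -hsum a b c d hab hcd hdisj + hc - hd + hb - ha

/- A branch of `log (point u - point v)` can be chosen antisymmetric up to `±πi` with the sign given
by the order of `u` and `v`. The four signs for `a, b` against `c, d` then add up to the crossing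
number of the chords `ab` and `cd` of a convex polygon, whatever the drawing. -/
theorem exists_crossing_cocycle [LinearOrder V] (D : PlaneDrawing G) :
    ∃ n : V → V → V → ZMod 2, ∀ a b c d, G.Adj a b → G.Adj c d →
      Disjoint ({a, b} : Set V) {c, d} → a < c → c < d →
      n c a b + n d a b + (n a c d + n b c d) = if c < b ∧ b < d then 1 else 0 := by
  obtain ⟨l, hl, hflip⟩ := exists_log_sub_branch D.point_injective
  obtain ⟨ν, hν⟩ := D.exists_winding hl
  refine ⟨fun v a b => ν v a b, fun a b c d hab hcd hdisj hac hcd' => ?_⟩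
  have hwinding := hν a b c d hab hcd hdisj
  have hbc : b ≠ c := fun h => hdisj.notMem_of_mem_left (a := b) (by simp) (by simp [h])
  have hbd : b ≠ d := fun h => hdisj.notMem_of_mem_left (a := b) (by simp) (by simp [h])
  have hpi : (2 * Real.pi * Complex.I : ℂ) ≠ 0 := Complex.two_pi_I_ne_zero
  have hcross : ν c a b - ν d a b + ν b c d - ν a c d = if c < b ∧ b < d then -1 else 0 := by
    refine Int.cast_injective (α := ℂ) (mul_right_cancel₀ hpi (hwinding.symm.trans ?_))
    rw [hflip a c hac, hflip a d (hac.trans hcd')]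
    rcases lt_or_gt_of_ne hbc with hbc' | hcb
    · rw [hflip b c hbc', hflip b d (hbc'.trans hcd'), if_neg fun h => h.1.not_gt hbc']
      push_cast; ring
    rcases lt_or_gt_of_ne hbd with hbd' | hdb
    · rw [hflip c b hcb, hflip b d hbd', if_pos ⟨hcb, hbd'⟩]
      push_cast; ring
    · rw [hflip c b hcb, hflip d b hdb, if_neg fun h => h.2.not_gt hdb]
      push_cast; ring
  have hmod := congrArg (Int.cast : ℤ → ZMod 2) hcross
  push_cast [CharTwo.sub_eq_add] at hmod
  rw [show (-1 : ZMod 2) = 1 from rfl] at hmod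
  rw [← hmod]
  ring

end PlaneDrawing

section VanKampen

open Finset

theorem sum_sum_lt_add_swap {ι M : Type*} [Fintype ι] [LinearOrder ι] [AddCommMonoid M]
    (F : ι → ι → M) (hF : ∀ i, F i i = 0) :
    ∑ i, ∑ j, (if i < j then F i j + F j i else 0) = ∑ i, ∑ j, F i j := by
  have hsplit : ∀ i j, F i j = (if i < j then F i j else 0) + if j < i then F i j else 0 := by
    intro i j
    rcases lt_trichotomy i j with h | rfl | h
    · simp [h, h.not_gt]
    · simp [hF]
    · simp [h, h.not_gt]
  calc ∑ i, ∑ j, (if i < j then F i j + F j i else 0)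
      = ∑ i, ∑ j, (if i < j then F i j else 0) + ∑ i, ∑ j, (if i < j then F j i else 0) := by
        simp only [← sum_add_distrib, ← ite_add_zero]
    _ = ∑ i, ∑ j, (if i < j then F i j else 0) + ∑ i, ∑ j, (if j < i then F i j else 0) := by
        rw [sum_comm (f := fun i j => if i < j then F j i else 0)]
    _ = ∑ i, ∑ j, F i j := by
        simp only [← sum_add_distrib, ← hsplit]

/-- `ab` and `cd` are edges of `G` without a common vertex. -/
def DisjointEdges {V : Type*} (G : SimpleGraph V) (a b c d : V) : Prop :=
  G.Adj a b ∧ G.Adj c d ∧ Disjoint ({a, b} : Set V) {c, d}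

namespace DisjointEdges

variable {V : Type*} {G : SimpleGraph V}

theorem comm {a b c d : V} : DisjointEdges G a b c d ↔ DisjointEdges G c d a b :=
  ⟨fun h => ⟨h.2.1, h.1, h.2.2.symm⟩, fun h => ⟨h.2.1, h.1, h.2.2.symm⟩⟩

theorem flip_right {a b c d : V} : DisjointEdges G a b c d ↔ DisjointEdges G a b d c := by
  simp only [DisjointEdges, G.adj_comm c d, Set.pair_comm c d]

theorem ne {a b c d : V} (h : DisjointEdges G a b c d) : a ≠ c := fun hac =>
  h.2.2.notMem_of_mem_left (a := a) (by simp) (by simp [hac])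

open Classical in
theorem sum_pairs_eq_sum_endpoints [Fintype V] [LinearOrder V] {M : Type*} [AddCommMonoid M]
    (n : V → V → V → M) :
    (∑ a, ∑ c, if a < c then (∑ b, ∑ d, if a < b ∧ c < d ∧ DisjointEdges G a b c d then
        (n c a b + n d a b) + (n a c d + n b c d) else 0) else 0) =
      ∑ a, ∑ b, ∑ c, ∑ d, if a < b ∧ DisjointEdges G a b c d then n c a b else 0 := by
  let F (a c : V) : M := ∑ b, ∑ d,
    if a < b ∧ c < d ∧ DisjointEdges G a b c d then n c a b + n d a b else 0
  have hF : ∀ a, F a a = 0 := fun a =>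
    sum_eq_zero fun b _ => sum_eq_zero fun d _ => if_neg fun h => h.2.2.ne rfl
  let H (a b c d : V) : M := if a < b ∧ DisjointEdges G a b c d then n c a b else 0
  have hH : ∀ a b c, H a b c c = 0 := fun a b c => if_neg fun h => h.2.2.1.ne rfl
  calc
    _ = ∑ a, ∑ c, if a < c then F a c + F c a else 0 := by
        refine sum_congr rfl fun a _ => sum_congr rfl fun c _ => if_congr Iff.rfl ?_ rfl
        rw [show F c a = _ from sum_comm]
        simp only [F, ← sum_add_distrib, comm (a := c), and_left_comm (a := c < _), ← ite_add_zero]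
    _ = ∑ a, ∑ c, F a c := sum_sum_lt_add_swap F hF
    _ = ∑ a, ∑ b, ∑ c, ∑ d, if c < d then H a b c d + H a b d c else 0 := by
        refine sum_congr rfl fun a _ => sum_comm.trans ?_
        refine sum_congr rfl fun b _ => sum_congr rfl fun c _ => sum_congr rfl fun d _ => ?_
        simp only [H, flip_right (c := d), ← ite_add_zero, ← ite_and, and_left_comm]
    _ = ∑ a, ∑ b, ∑ c, ∑ d, H a b c d :=
        sum_congr rfl fun a _ => sum_congr rfl fun b _ => sum_sum_lt_add_swap _ (hH a b)

end DisjointEdges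

variable {V : Type*} [Fintype V] [LinearOrder V]

/-- The quadruples `(a, b, c, d)` for which `ab` and `cd` are edges of `G` that cross when the
vertices are placed in convex position in their given order. -/
def crossingChords (G : SimpleGraph V) [DecidableRel G.Adj] : Finset (V × V × V × V) :=
  {x | G.Adj x.1 x.2.1 ∧ G.Adj x.2.2.1 x.2.2.2 ∧
    x.1 < x.2.2.1 ∧ x.2.2.1 < x.2.1 ∧ x.2.1 < x.2.2.2}

theorem PlaneDrawing.even_card_crossingChords {G : SimpleGraph V} [DecidableRel G.Adj]
    (D : PlaneDrawing G)
    (hG : ∀ a b v, G.Adj a b → v ≠ a → v ≠ b → Even #{w | G.Adj v w ∧ w ≠ a ∧ w ≠ b}) :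
    Even #(crossingChords G) := by
  classical
  obtain ⟨n, hn⟩ := D.exists_crossing_cocycle
  rw [← ZMod.natCast_eq_zero_iff_even]
  calc (#(crossingChords G) : ZMod 2)
      = ∑ a, ∑ c, if a < c then (∑ b, ∑ d, if a < b ∧ c < d ∧ DisjointEdges G a b c d then
          (n c a b + n d a b) + (n a c d + n b c d) else 0) else 0 := by
        rw [crossingChords, card_filter]
        push_cast
        simp only [Fintype.sum_prod_type]
        refine sum_congr rfl fun a _ => sum_comm.trans (sum_congr rfl fun c _ => ?_)
        split_ifs with hac
        · refine sum_congr rfl fun b _ => sum_congr rfl fun d _ => ?_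
          by_cases h : a < b ∧ c < d ∧ DisjointEdges G a b c d
          · rw [if_pos h, hn a b c d h.2.2.1 h.2.2.2.1 h.2.2.2.2 hac h.2.1]
            simp [h.2.2.1, h.2.2.2.1, hac]
          · rw [if_neg h, if_neg]
            rintro ⟨hab, hcd, -, hcb, hbd⟩
            refine h ⟨hac.trans hcb, hcb.trans hbd, hab, hcd, ?_⟩
            simp [hac.ne', hcb.ne, hbd.ne', (hac.trans (hcb.trans hbd)).ne']
        · simp [hac]
    _ = ∑ a, ∑ b, ∑ c, ∑ d, if a < b ∧ DisjointEdges G a b c d then n c a b else 0 :=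
        DisjointEdges.sum_pairs_eq_sum_endpoints n
    _ = 0 := by
        refine sum_eq_zero fun a _ => sum_eq_zero fun b _ => sum_eq_zero fun c _ => ?_
        rw [← sum_filter, sum_const, ← Nat.cast_smul_eq_nsmul (ZMod 2)]
        suffices Even #{d | a < b ∧ DisjointEdges G a b c d} by
          rw [this.natCast_zmod_two, zero_smul]
        by_cases h : a < b ∧ G.Adj a b ∧ c ≠ a ∧ c ≠ b
        · convert hG a b c h.2.1 h.2.2.1 h.2.2.2 using 3
          simp [DisjointEdges, h, ne_comm]
        · rw [filter_false_of_mem]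
          · exact Even.zero
          · rintro d - ⟨hab, hd⟩
            have hd' := DisjointEdges.comm.1 hd
            exact h ⟨hab, hd.1, hd'.ne, (DisjointEdges.flip_right.1 hd').ne⟩

theorem isEmpty_planeDrawing_K5 : IsEmpty (PlaneDrawing (⊤ : SimpleGraph (Fin 5))) :=
  ⟨fun D => absurd (D.even_card_crossingChords (by decide)) (by decide +kernel)⟩

instance {V W : Type*} : DecidableRel (completeBipartiteGraph V W).Adj := fun v w =>
  inferInstanceAs (Decidable (v.isLeft ∧ w.isRight ∨ v.isRight ∧ w.isLeft))

local instance : LinearOrder (Fin 3 ⊕ Fin 3) :=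
  LinearOrder.lift' finSumFinEquiv finSumFinEquiv.injective

theorem isEmpty_planeDrawing_K33 :
    IsEmpty (PlaneDrawing (completeBipartiteGraph (Fin 3) (Fin 3))) :=
  ⟨fun D => absurd (D.even_card_crossingChords (by decide)) (by decide +kernel)⟩

end VanKampen

/-! ### The 1-skeleton of a triangulated sphere -/

section Sphere

theorem isPreconnected_compl_finite_sphere {E : Type*} [NormedAddCommGroup E]
    [InnerProductSpace ℝ E] {n : ℕ} [Fact (Module.finrank ℝ E = n + 1)] (hn : 1 < n)
    {F : Set (Metric.sphere (0 : E) 1)} (hF : F.Finite) (hne : F.Nonempty) : IsPreconnected Fᶜ := by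
  obtain ⟨x, hx⟩ := hne
  set S := stereographic' n x
  have htarget : S.target = Set.univ := by simp [S]
  have hplane : IsPreconnected (S '' (F \ {x}))ᶜ :=
    (Set.Countable.isConnected_compl_of_one_lt_rank
      (Module.one_lt_rank_of_one_lt_finrank (by simpa))
      (hF.sdiff.image S).countable).isPreconnected
  have hsource : Fᶜ ⊆ S.source := by
    intro y hy
    simpa [S] using fun h : y = x => hy (h ▸ hx)
  have hcompl : S '' Fᶜ = (S '' (F \ {x}))ᶜ := by
    have hFc : Fᶜ = S.source \ (F \ {x}) := by
      ext y
      by_cases hy : y = x <;> simp [S, hy, hx]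
    rw [hFc, S.injOn.image_sdiff_subset (by simp [S, Set.sdiff_eq]), S.image_source_eq_target,
      htarget, Set.compl_eq_univ_sdiff]
  have := hplane.image S.symm (S.continuousOn_symm.mono (by simp [htarget]))
  rw [← hcompl] at this
  exact (S.toPartialEquiv.symm_image_image_of_subset_source hsource) ▸ this

theorem exists_injOn_compl_singleton_sphere (x : Metric.sphere (0 : EuclideanSpace ℝ (Fin 3)) 1) :
    ∃ ψ : Metric.sphere (0 : EuclideanSpace ℝ (Fin 3)) 1 → ℂ,
      ContinuousOn ψ {x}ᶜ ∧ Set.InjOn ψ {x}ᶜ := by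
  have : Fact (Module.finrank ℝ (EuclideanSpace ℝ (Fin 3)) = 2 + 1) := ⟨by simp⟩
  let e := Complex.orthonormalBasisOneI.repr.symm
  rw [← stereographic'_source (n := 2) x]
  exact ⟨fun y => e (stereographic' 2 x y),
    e.continuous.comp_continuousOn (stereographic' 2 x).continuousOn,
    e.injective.comp_injOn (stereographic' 2 x).injOn⟩

end Sphere

section Skeleton

variable {E : Type*} [NormedAddCommGroup E] [NormedSpace ℝ E] {L : SimplicialComplex ℝ E}

theorem exists_mem_convexHull_notMem_vertices {F : Finset E} (hF : F ∈ L.faces)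
    (hcard : F.card = 2) : ∃ x ∈ convexHull ℝ (F : Set E), x ∉ L.vertices := by
  classical
  obtain ⟨u, v, huv, rfl⟩ := Finset.card_eq_two.1 hcard
  have hmid : midpoint ℝ u v ∈ convexHull ℝ (({u, v} : Finset E) : Set E) := by
    rw [Finset.coe_pair, convexHull_pair]
    exact midpoint_mem_segment u v
  refine ⟨_, hmid, fun hvertex => ?_⟩
  simpa [midpoint_eq_left_iff, midpoint_eq_right_iff, huv] using
    (SimplicialComplex.vertex_mem_convexHull_iff hvertex hF).1 hmid

theorem convexHull_inter_convexHull_subset_vertices {F F' : Finset E} (hF : F ∈ L.faces)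
    (hF' : F' ∈ L.faces) (hcard : F.card ≤ 2) (hcard' : F'.card ≤ 2) (hne : F ≠ F') :
    convexHull ℝ (F : Set E) ∩ convexHull ℝ (F' : Set E) ⊆ L.vertices := by
  classical
  rw [SimplicialComplex.convexHull_inter_convexHull hF hF', ← Finset.coe_inter]
  have hinter : (F ∩ F').card ≤ 1 := by
    by_contra! h
    exact hne ((Finset.eq_of_subset_of_card_le Finset.inter_subset_left (by lia)).symm.trans
      (Finset.eq_of_subset_of_card_le Finset.inter_subset_right (by lia)))
  intro x hx
  obtain ⟨y, hy⟩ := Finset.card_eq_one.1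
    (hinter.antisymm (Finset.card_pos.2 (by exact_mod_cast convexHull_nonempty_iff.1 ⟨x, hx⟩)))
  rw [hy, Finset.coe_singleton, convexHull_singleton, Set.mem_singleton_iff] at hx
  exact hx ▸ L.down_closed hF (hy ▸ Finset.inter_subset_left) (by simp)

theorem isPreconnected_space_sdiff_vertices (hfin : L.faces.Finite) (hne : L.vertices.Nonempty)
    (φ : L.space ≃ₜ Metric.sphere (0 : EuclideanSpace ℝ (Fin 3)) 1) :
    IsPreconnected (L.space \ L.vertices) := by
  have : Fact (Module.finrank ℝ (EuclideanSpace ℝ (Fin 3)) = 2 + 1) := ⟨by simp⟩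
  have hvertices : L.vertices.Finite := by
    rw [L.vertices_eq]
    exact hfin.biUnion fun F _ => F.finite_toSet
  set W : Set L.space := Subtype.val ⁻¹' L.vertices
  have hWfin : W.Finite := hvertices.preimage Subtype.val_injective.injOn
  have hWne : W.Nonempty := by
    obtain ⟨v, hv⟩ := hne
    exact ⟨⟨v, L.vertices_subset_space hv⟩, hv⟩
  have hcompl : IsPreconnected Wᶜ := by
    rw [← φ.isPreconnected_image, φ.image_compl]
    exact isPreconnected_compl_finite_sphere one_lt_two (hWfin.image φ) (hWne.image φ)
  simpa [W, ← Set.preimage_compl, Subtype.image_preimage_coe, Set.sdiff_eq] using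
    hcompl.image _ continuous_subtype_val.continuousOn

/-- The underlying space of the part of the 1-skeleton of `L` whose vertices lie in `X`. -/
def skeletonIn (L : SimplicialComplex ℝ E) (X : Set E) : Set E :=
  ⋃ F ∈ {F ∈ L.faces | F.card ≤ 2 ∧ (F : Set E) ⊆ X}, convexHull ℝ (F : Set E)

theorem skeletonIn_mono {X Y : Set E} (h : X ⊆ Y) : skeletonIn L X ⊆ skeletonIn L Y :=
  Set.biUnion_subset_biUnion_left fun _ hF => ⟨hF.1, hF.2.1, hF.2.2.trans h⟩

theorem skeletonIn_subset_space (X : Set E) : skeletonIn L X ⊆ L.space :=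
  Set.iUnion₂_subset fun _ hF => L.convexHull_subset_space hF.1

theorem convexHull_subset_skeletonIn {X : Set E} {F : Finset E} (hF : F ∈ L.faces)
    (hcard : F.card ≤ 2) (hX : (F : Set E) ⊆ X) : convexHull ℝ (F : Set E) ⊆ skeletonIn L X :=
  Set.subset_biUnion_of_mem (u := fun F : Finset E => convexHull ℝ (F : Set E))
    (show F ∈ {F ∈ L.faces | F.card ≤ 2 ∧ (F : Set E) ⊆ X} from ⟨hF, hcard, hX⟩)

theorem disjoint_skeletonIn {X Y : Set E} (h : Disjoint X Y) :
    Disjoint (skeletonIn L X) (skeletonIn L Y) := by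
  simp only [skeletonIn, Set.disjoint_iUnion₂_left, Set.disjoint_iUnion₂_right]
  intro F hF F' hF'
  rw [Set.disjoint_iff_inter_eq_empty, SimplicialComplex.convexHull_inter_convexHull hF'.1 hF.1,
    (h.mono hF'.2.2 hF.2.2).inter_eq, convexHull_empty]

theorem exists_mem_space_notMem_skeletonIn (hfin : L.faces.Finite)
    (φ : L.space ≃ₜ Metric.sphere (0 : EuclideanSpace ℝ (Fin 3)) 1)
    {e e' : Finset E} (he : e ∈ L.faces) (he' : e' ∈ L.faces) (hcard : e.card = 2)
    (hcard' : e'.card = 2) (hne : e ≠ e') : ∃ x ∈ L.space, x ∉ skeletonIn L Set.univ := by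
  by_contra! hcover
  have hconn : IsPreconnected (L.space \ L.vertices) := by
    obtain ⟨v, hv⟩ := L.nonempty_of_mem_faces he
    exact isPreconnected_space_sdiff_vertices hfin ⟨v, L.down_closed he (by simpa) (by simp)⟩ φ
  set others := {F ∈ L.faces | F.card ≤ 2 ∧ F ≠ e}
  have hclosed (F : Finset E) : IsClosed (convexHull ℝ (F : Set E)) :=
    F.finite_toSet.isClosed_convexHull ℝ
  have hclosed_others : IsClosed (⋃ F ∈ others, convexHull ℝ (F : Set E)) :=
    (hfin.subset fun F hF => hF.1).isClosed_biUnion fun F _ => hclosed F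
  obtain ⟨x, hx, hxv⟩ := exists_mem_convexHull_notMem_vertices he hcard
  obtain ⟨x', hx', hxv'⟩ := exists_mem_convexHull_notMem_vertices he' hcard'
  obtain ⟨y, ⟨-, hyv⟩, hye, hyo⟩ :=
    isPreconnected_closed_iff.1 hconn _ _ (hclosed e) hclosed_others
      (fun y hy => by
        obtain ⟨F, ⟨hF, hFcard, -⟩, hyF⟩ := Set.mem_iUnion₂.1 (hcover y hy.1)
        by_cases hFe : F = e
        · exact .inl (hFe ▸ hyF)
        · exact .inr (Set.mem_biUnion (show F ∈ others from ⟨hF, hFcard, hFe⟩) hyF))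
      ⟨x, ⟨L.convexHull_subset_space he hx, hxv⟩, hx⟩
      ⟨x', ⟨L.convexHull_subset_space he' hx', hxv'⟩,
        Set.mem_biUnion (show e' ∈ others from ⟨he', hcard'.le, hne.symm⟩) hx'⟩
  obtain ⟨F, ⟨hF, hFcard, hFe⟩, hyF⟩ := Set.mem_iUnion₂.1 hyo
  exact hyv (convexHull_inter_convexHull_subset_vertices he hF hcard.le hFcard hFe.symm ⟨hye, hyF⟩)

theorem exists_embedding_skeletonIn (φ : L.space ≃ₜ Metric.sphere (0 : EuclideanSpace ℝ (Fin 3)) 1)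
    (h : ∃ x ∈ L.space, x ∉ skeletonIn L Set.univ) :
    ∃ f : E → ℂ, ContinuousOn f (skeletonIn L Set.univ) ∧
      Set.InjOn f (skeletonIn L Set.univ) := by
  obtain ⟨x, hx, hxs⟩ := h
  obtain ⟨ψ, hψ, hψi⟩ := exists_injOn_compl_singleton_sphere (φ ⟨x, hx⟩)
  set K := skeletonIn L Set.univ
  let ι : K → L.space := Set.inclusion (skeletonIn_subset_space _)
  have hι (y : K) : φ (ι y) ∈ ({φ ⟨x, hx⟩}ᶜ : Set _) := fun hy => by
    have hyx : (y : E) = x := congrArg Subtype.val (φ.injective hy)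
    exact hxs (hyx ▸ y.2)
  have hcont : Continuous fun y => ψ (φ (ι y)) :=
    hψ.comp_continuous (φ.continuous.comp (continuous_inclusion _)) hι
  have hinj : Function.Injective fun y => ψ (φ (ι y)) := fun y z hyz =>
    Set.inclusion_injective _ (φ.injective (hψi (hι y) (hι z) hyz))
  have hextend : K.domRestrict (Function.extend Subtype.val (fun y => ψ (φ (ι y))) 0) =
      fun y => ψ (φ (ι y)) := funext (Subtype.val_injective.extend_apply _ _)
  refine ⟨Function.extend Subtype.val (fun y => ψ (φ (ι y))) 0, ?_, ?_⟩
  · rwa [continuousOn_iff_continuous_domRestrict, hextend]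
  · rwa [Set.injOn_iff_injective, hextend]

end Skeleton

section WalkIn

variable {V : Type*} {G : SimpleGraph V} {X Y : Set V} {u v w : V}

/-- `u` and `v` are joined by a walk of `G` all of whose vertices lie in `X`. -/
def WalkIn (G : SimpleGraph V) (X : Set V) (u v : V) : Prop :=
  ∃ p : G.Walk u v, ∀ w ∈ p.support, w ∈ X

namespace WalkIn

theorem left_mem (h : WalkIn G X u v) : u ∈ X :=
  h.elim fun p hp => hp u p.start_mem_support

theorem symm (h : WalkIn G X u v) : WalkIn G X v u :=
  h.elim fun p hp => ⟨p.reverse, by simpa using hp⟩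

theorem mono (h : WalkIn G X u v) (hXY : X ⊆ Y) : WalkIn G Y u v :=
  h.elim fun p hp => ⟨p, fun w hw => hXY (hp w hw)⟩

theorem of_adj (h : G.Adj u v) (hu : u ∈ X) (hv : v ∈ X) : WalkIn G X u v :=
  ⟨h.toWalk, by simp [hu, hv]⟩

theorem trans (h : WalkIn G X u v) (h' : WalkIn G X v w) : WalkIn G X u w := by
  obtain ⟨⟨p, hp⟩, ⟨q, hq⟩⟩ := h, h'
  exact ⟨p.append q, fun x hx =>
    ((SimpleGraph.Walk.mem_support_append_iff _ _).1 hx).elim (hp x) (hq x)⟩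

end WalkIn

end WalkIn

section AlmostEmbeds

variable {W V : Type*} {H : SimpleGraph W} {G : SimpleGraph V}

/-- `H` maps to `G` with distinct vertices going to distinct vertices, edges going to walks, and
vertex-disjoint edges going to disjoint walks. Every subdivision of `H` in `G` gives such a map. -/
def AlmostEmbeds (H : SimpleGraph W) (G : SimpleGraph V) : Prop :=
  ∃ f : W → V, Function.Injective f ∧ ∃ X : Sym2 W → Set V,
    (∀ a b, H.Adj a b → WalkIn G (X s(a, b)) (f a) (f b)) ∧
    ∀ e ∈ H.edgeSet, ∀ e' ∈ H.edgeSet, Disjoint (e : Set W) e' → Disjoint (X e) (X e')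

theorem AlmostEmbeds.of_interiors {f : W → V} (hf : Function.Injective f) (I : Sym2 W → Set V)
    (hwalk : ∀ a b, H.Adj a b → WalkIn G ({f a, f b} ∪ I s(a, b)) (f a) (f b))
    (hvertex : ∀ e ∈ H.edgeSet, ∀ w ∉ e, f w ∉ I e)
    (hdisj : H.edgeSet.PairwiseDisjoint I) : AlmostEmbeds H G := by
  have hne {e e' : Sym2 W} (h : Disjoint (e : Set W) e') : e ≠ e' := by
    rintro rfl
    exact absurd e.out_fst_mem (Set.disjoint_left.1 h e.out_fst_mem)
  refine ⟨f, hf, fun e => f '' e ∪ I e, fun a b h => ?_, fun e he e' he' hee' => ?_⟩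
  · simpa [Set.image_pair] using hwalk a b h
  · have hends {e e' : Sym2 W} (he' : e' ∈ H.edgeSet) (h : Disjoint (e : Set W) e') :
        Disjoint (f '' (e : Set W)) (I e') := by
      rw [Set.disjoint_left]
      rintro _ ⟨w, hw, rfl⟩
      exact hvertex e' he' w (Set.disjoint_left.1 h hw)
    simp only [Set.disjoint_union_left, Set.disjoint_union_right]
    exact ⟨⟨(Set.disjoint_image_iff hf).2 hee', (hends he hee'.symm).symm⟩,
      hends he' hee', hdisj he he' (hne hee')⟩

/-- `G` satisfies the Kuratowski condition for planarity: it contains no subdivision of `K₅` or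
`K₃,₃`, where edges of the subdivision with a common endpoint are even allowed to overlap. -/
structure KuratowskiPlanar (G : SimpleGraph V) : Prop where
  not_K5 : ¬AlmostEmbeds (⊤ : SimpleGraph (Fin 5)) G
  not_K33 : ¬AlmostEmbeds (completeBipartiteGraph (Fin 3) (Fin 3)) G

end AlmostEmbeds

section SkeletonGraph

variable {E : Type*} [AddCommGroup E] [TopologicalSpace E] [Module ℝ E]

/-- The 1-skeleton of `L`, as a graph on the ambient space: points that are not vertices of `L` are
isolated. -/
def skeletonGraph [DecidableEq E] (L : SimplicialComplex ℝ E) : SimpleGraph E where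
  Adj u v := u ≠ v ∧ {u, v} ∈ L.faces
  symm := ⟨fun u v h => ⟨h.1.symm, Finset.pair_comm u v ▸ h.2⟩⟩
  loopless := ⟨fun _ h => h.1 rfl⟩

end SkeletonGraph

section SkeletonDrawing

variable {E : Type*} [NormedAddCommGroup E] [NormedSpace ℝ E] [DecidableEq E]
  {L : SimplicialComplex ℝ E} {X : Set E} {u v : E}

theorem joinedIn_skeletonIn_of_adj (h : (skeletonGraph L).Adj u v) (hu : u ∈ X) (hv : v ∈ X) :
    JoinedIn (skeletonIn L X) u v := by
  have hsub : segment ℝ u v ⊆ skeletonIn L X := by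
    rw [← convexHull_pair, ← Finset.coe_pair]
    exact convexHull_subset_skeletonIn h.2 Finset.card_le_two (by simp [Set.insert_subset_iff, *])
  exact .of_segment_subset hsub

theorem WalkIn.joinedIn_skeletonIn (h : WalkIn (skeletonGraph L) X u v) (huv : u ≠ v) :
    JoinedIn (skeletonIn L X) u v := by
  obtain ⟨p, hp⟩ := h
  induction p with
  | nil => exact absurd rfl huv
  | @cons u w v huw p ih =>
    have hfirst := joinedIn_skeletonIn_of_adj huw (hp u (by simp)) (hp w (by simp))
    by_cases hwv : w = v
    · exact hwv ▸ hfirst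
    · exact hfirst.trans (ih hwv fun x hx => hp x (by simp [hx]))

theorem WalkIn.exists_face (h : WalkIn (skeletonGraph L) X u v) (huv : u ≠ v) :
    ∃ e ∈ L.faces, e.card = 2 ∧ (e : Set E) ⊆ X := by
  obtain ⟨_ | @⟨_, w, _, huw, p⟩, hp⟩ := h
  · exact absurd rfl huv
  · exact ⟨{u, w}, huw.2, Finset.card_pair huw.1,
      by simpa [Set.insert_subset_iff] using ⟨hp u (by simp), hp w (by simp)⟩⟩

theorem AlmostEmbeds.nonempty_planeDrawing {W : Type*} {H : SimpleGraph W}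
    (h : AlmostEmbeds H (skeletonGraph L)) (hne : ∀ i, ∃ j, H.Adj i j) {φ : E → ℂ}
    (hφ : ContinuousOn φ (skeletonIn L Set.univ)) (hφi : Set.InjOn φ (skeletonIn L Set.univ)) :
    Nonempty (PlaneDrawing H) := by
  obtain ⟨f, hf, X, hwalk, hdisj⟩ := h
  have hjoin {a b : W} (hab : H.Adj a b) : JoinedIn (skeletonIn L (X s(a, b))) (f a) (f b) :=
    (hwalk a b hab).joinedIn_skeletonIn (hf.ne hab.ne)
  have hpoint (a : W) : f a ∈ skeletonIn L Set.univ := by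
    obtain ⟨b, hab⟩ := hne a
    exact skeletonIn_mono (Set.subset_univ _) (hjoin hab).source_mem
  have harc {a b : W} (hab : H.Adj a b) :
      Set.range (hjoin hab).somePath ⊆ skeletonIn L (X s(a, b)) :=
    Set.range_subset_iff.2 (hjoin hab).somePath_mem
  exact ⟨{
    point a := φ (f a)
    point_injective a b hab := hf (hφi (hpoint a) (hpoint b) hab)
    arc hab := (hjoin hab).somePath.map'
      (hφ.mono ((harc hab).trans (skeletonIn_mono (Set.subset_univ _))))
    disjoint_arc {a b c d} hab hcd hne := by
      have hX : Disjoint (X s(a, b)) (X s(c, d)) :=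
        hdisj _ hab _ hcd (by simpa using hne)
      have hrange := (disjoint_skeletonIn (L := L) hX).mono (harc hab) (harc hcd)
      rw [Set.disjoint_left]
      rintro _ ⟨s, rfl⟩ ⟨t, hst⟩
      have hsub {a b : W} (hab : H.Adj a b) s : (hjoin hab).somePath s ∈ skeletonIn L Set.univ :=
        skeletonIn_mono (Set.subset_univ _) ((hjoin hab).somePath_mem s)
      exact Set.disjoint_left.1 hrange ⟨s, rfl⟩ ⟨t, hφi (hsub hcd t) (hsub hab s) hst⟩ }⟩

theorem kuratowskiPlanar_skeletonGraph (hfin : L.faces.Finite)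
    (φ : L.space ≃ₜ Metric.sphere (0 : EuclideanSpace ℝ (Fin 3)) 1) :
    KuratowskiPlanar (skeletonGraph L) := by
  have hdraw {W : Type} {H : SimpleGraph W} (h : AlmostEmbeds H (skeletonGraph L))
      (hne : ∀ i, ∃ j, H.Adj i j) {a b c d : W} (hab : H.Adj a b) (hcd : H.Adj c d)
      (hdisj : Disjoint ({a, b} : Set W) {c, d}) : Nonempty (PlaneDrawing H) := by
    have hedges := h
    obtain ⟨f, hf, X, hwalk, hX⟩ := hedges
    obtain ⟨e, he, hcard, heX⟩ := (hwalk a b hab).exists_face (hf.ne hab.ne)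
    obtain ⟨e', he', hcard', heX'⟩ := (hwalk c d hcd).exists_face (hf.ne hcd.ne)
    have hee' : e ≠ e' := by
      rintro rfl
      have := (hX _ hab _ hcd (by simpa using hdisj)).mono heX heX'
      simp_all
    obtain ⟨g, hg, hgi⟩ := exists_embedding_skeletonIn φ
      (exists_mem_space_notMem_skeletonIn hfin φ he he' hcard hcard' hee')
    exact h.nonempty_planeDrawing hne hg hgi
  constructor <;> intro h
  · exact isEmpty_planeDrawing_K5.false
      (hdraw h (by decide) (a := 0) (b := 1) (c := 2) (d := 3) (by decide) (by decide)
        (by simp)).some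
  · exact isEmpty_planeDrawing_K33.false
      (hdraw h (by decide) (a := .inl 0) (b := .inr 0) (c := .inl 1) (d := .inr 1) (by decide)
        (by decide) (by simp)).some

end SkeletonDrawing

/-! ### Quadrilaterals in planar graphs -/

section FourCycle

variable {V : Type*} {G : SimpleGraph V} {a b c d x y t t' : V}

/-- `a, b, c, d` is a cycle of length four in `G`. -/
structure FourCycle (G : SimpleGraph V) (a b c d : V) : Prop where
  ab : G.Adj a b
  bc : G.Adj b c
  cd : G.Adj c d
  da : G.Adj d a
  ac : a ≠ c
  bd : b ≠ d

theorem FourCycle.rotate (h : FourCycle G a b c d) : FourCycle G b c d a :=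
  ⟨h.bc, h.cd, h.da, h.ab, h.bd, h.ac.symm⟩

theorem FourCycle.mono {H : SimpleGraph V} (h : FourCycle H a b c d) (hHG : H ≤ G) :
    FourCycle G a b c d :=
  ⟨hHG h.ab, hHG h.bc, hHG h.cd, hHG h.da, h.ac, h.bd⟩

theorem FourCycle.of_mem_commonNeighbors (hb : b ∈ G.commonNeighbors a c)
    (hd : d ∈ G.commonNeighbors a c) (hac : a ≠ c) (hbd : b ≠ d) : FourCycle G a b c d :=
  ⟨hb.1, hb.2.symm, hd.2, hd.1.symm, hac, hbd⟩

namespace KuratowskiPlanar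

theorem not_walkIn_of_opposite (hG : KuratowskiPlanar G) (h : FourCycle G a b c d)
    (hx : x ∈ G.commonNeighbors a c) (hy : y ∈ G.commonNeighbors b d) (hxy : x ≠ y) :
    ¬WalkIn G {a, b, c, d}ᶜ x y := by
  intro hw
  have hx' := hw.left_mem
  have hy' := hw.symm.left_mem
  simp only [Set.mem_compl_iff, Set.mem_insert_iff, Set.mem_singleton_iff, not_or] at hx' hy'
  obtain ⟨hab, hbc, hcd, hda, hac, hbd⟩ := h
  rw [SimpleGraph.mem_commonNeighbors] at hx hy
  refine hG.not_K33 (AlmostEmbeds.of_interiors (f := Sum.elim ![x, b, d] ![y, a, c]) ?_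
    (fun e => if e = s(.inl 0, .inr 0) then {a, b, c, d}ᶜ else ∅) ?_ ?_ ?_)
  · rintro (i | i) (j | j) hij <;> fin_cases i <;> fin_cases j <;> simp at hij ⊢ <;>
      grind [hab.ne, hbc.ne, hcd.ne, hda.ne]
  · intro i j hij
    by_cases he : s(i, j) = s(.inl 0, .inr 0)
    · rw [if_pos he]
      rcases Sym2.eq_iff.1 he with ⟨rfl, rfl⟩ | ⟨rfl, rfl⟩
      · exact hw.mono Set.subset_union_right
      · exact hw.symm.mono Set.subset_union_right
    · refine .of_adj ?_ (by simp) (by simp)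
      rcases i with i | i <;> rcases j with j | j <;> fin_cases i <;> fin_cases j <;>
        simp_all [SimpleGraph.adj_comm]
  · rintro e - (i | i) hi <;> fin_cases i <;> simp at hi ⊢ <;> grind
  · intro e _ e' _ hne
    by_cases he : e = s(.inl 0, .inr 0) <;> simp_all [Function.onFun, eq_comm]

theorem not_walkIn_of_adj_vertex (hG : KuratowskiPlanar G) (h : FourCycle G a b c d)
    (hx : x ∈ G.commonNeighbors a c) (hy : y ∈ G.commonNeighbors a c) (hxy : x ≠ y)
    (hbx : G.Adj b x) (hby : G.Adj b y) : ¬WalkIn G {a, b, c, d}ᶜ x y := by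
  intro hw
  have hx' := hw.left_mem
  have hy' := hw.symm.left_mem
  simp only [Set.mem_compl_iff, Set.mem_insert_iff, Set.mem_singleton_iff, not_or] at hx' hy'
  obtain ⟨hab, hbc, hcd, hda, hac, hbd⟩ := h
  rw [SimpleGraph.mem_commonNeighbors] at hx hy
  refine hG.not_K5 (AlmostEmbeds.of_interiors (f := ![a, c, x, y, b]) ?_
    (fun e => if e = s(0, 1) then {d} else if e = s(2, 3) then {a, b, c, d}ᶜ else ∅) ?_ ?_ ?_)
  · intro i j hij
    fin_cases i <;> fin_cases j <;> simp at hij ⊢ <;> grind [hab.ne, hbc.ne, hcd.ne, hda.ne]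
  · have hadc : WalkIn G {a, c, d} a c :=
      (WalkIn.of_adj hda.symm (by simp) (by simp)).trans (.of_adj hcd.symm (by simp) (by simp))
    intro i j hij
    by_cases he : s(i, j) = s(0, 1)
    · rw [if_pos he]
      rcases Sym2.eq_iff.1 he with ⟨rfl, rfl⟩ | ⟨rfl, rfl⟩
      · exact hadc.mono (by simp [Set.insert_subset_iff])
      · exact hadc.symm.mono (by simp [Set.insert_subset_iff])
    by_cases he' : s(i, j) = s(2, 3)
    · rw [if_neg he, if_pos he']
      rcases Sym2.eq_iff.1 he' with ⟨rfl, rfl⟩ | ⟨rfl, rfl⟩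
      · exact hw.mono Set.subset_union_right
      · exact hw.symm.mono Set.subset_union_right
    refine .of_adj ?_ (by simp) (by simp)
    fin_cases i <;> fin_cases j <;> simp_all [SimpleGraph.adj_comm]
  · rintro e - i hi
    fin_cases i <;> simp at hi ⊢ <;> grind
  · intro e _ e' _ hne
    by_cases h₁ : e = s(0, 1) <;> by_cases h₂ : e = s(2, 3) <;> by_cases h₃ : e' = s(0, 1) <;>
      simp_all [Function.onFun, eq_comm]

theorem commonNeighbors_subset_of_fourCycle (hG : KuratowskiPlanar G) (h : FourCycle G a b c d)
    (hsub : {a, b, c, d} ⊆ G.commonNeighbors t t') (htt' : t ≠ t') :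
    G.commonNeighbors t t' ⊆ {a, b, c, d} := by
  intro e he
  by_contra hne
  simp only [Set.insert_subset_iff, Set.singleton_subset_iff, Set.mem_insert_iff,
    Set.mem_singleton_iff, not_or] at hsub hne
  obtain ⟨ha, hb, hc, hd⟩ := hsub
  refine hG.not_walkIn_of_adj_vertex (.of_mem_commonNeighbors hb he htt' (Ne.symm hne.2.1)) ha hc
    h.ac h.ab.symm h.bc (.trans (v := d) (.of_adj h.da.symm ?_ ?_) (.of_adj h.cd.symm ?_ ?_))
  all_goals
    simp only [SimpleGraph.mem_commonNeighbors] at ha hb hc hd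
    grind [SimpleGraph.Adj.ne, h.ab.ne, h.bc.ne, h.cd.ne, h.da.ne, h.bd]

theorem not_adj_of_fourCycle (hG : KuratowskiPlanar G) (h : FourCycle G a b c d)
    (hsub : {a, b, c, d} ⊆ G.commonNeighbors t t') : ¬G.Adj t t' := by
  intro htt'
  simp only [Set.insert_subset_iff, Set.singleton_subset_iff, SimpleGraph.mem_commonNeighbors]
    at hsub
  obtain ⟨ha, hb, hc, hd⟩ := hsub
  refine hG.not_walkIn_of_adj_vertex h ⟨ha.1.symm, hc.1.symm⟩ ⟨ha.2.symm, hc.2.symm⟩ htt'.ne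
    hb.1.symm hb.2.symm (.of_adj htt' ?_ ?_)
  all_goals grind [SimpleGraph.Adj.ne]

theorem card_le_two_of_isClique (hG : KuratowskiPlanar G) {F : Finset V} (hF : G.IsClique F)
    (hsub : (F : Set V) ⊆ G.commonNeighbors a c) (hx : x ∈ G.commonNeighbors a c) (hxF : x ∉ F)
    (hac : a ≠ c) : F.card ≤ 2 := by
  by_contra hcard
  obtain ⟨u, hu, v, hv, w, hw, huv, huw, hvw⟩ := Finset.two_lt_card.1 (not_le.1 hcard)
  refine hG.not_walkIn_of_adj_vertex (.of_mem_commonNeighbors (hsub hw) hx hac ?_) (hsub hu)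
    (hsub hv) huv (hF hw hu huw.symm) (hF hw hv hvw.symm) (.of_adj (hF hu hv huv) ?_ ?_)
  · exact ne_of_mem_of_not_mem hw hxF
  · have := hsub hu
    grind [SimpleGraph.mem_commonNeighbors, SimpleGraph.Adj.ne]
  · have := hsub hv
    grind [SimpleGraph.mem_commonNeighbors, SimpleGraph.Adj.ne]

end KuratowskiPlanar

end FourCycle

section SuspVerts

variable {V : Type*} {G R : SimpleGraph V} {a b c d d' p q r s t t' v v' x y : V}

/-- The vertices of the suspension with suspension points `t, t'` on the common neighbours of
`t, t'`; here `R` is the graph of edges labelled `2`. -/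
def suspVerts (R : SimpleGraph V) (t t' : V) : Set V :=
  {t, t'} ∪ R.commonNeighbors t t'

theorem suspVerts_comm (R : SimpleGraph V) (t t' : V) : suspVerts R t t' = suspVerts R t' t := by
  rw [suspVerts, suspVerts, Set.pair_comm, R.commonNeighbors_symm]

theorem suspVerts_congr (h : s(t, t') = s(p, q)) : suspVerts R t t' = suspVerts R p q := by
  rcases Sym2.eq_iff.1 h with ⟨rfl, rfl⟩ | ⟨rfl, rfl⟩
  exacts [rfl, suspVerts_comm _ _ _]

theorem commonNeighbors_congr (h : s(t, t') = s(p, q)) :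
    R.commonNeighbors t t' = R.commonNeighbors p q := by
  rcases Sym2.eq_iff.1 h with ⟨rfl, rfl⟩ | ⟨rfl, rfl⟩
  exacts [rfl, R.commonNeighbors_symm _ _]

theorem commonNeighbors_subset_suspVerts : R.commonNeighbors t t' ⊆ suspVerts R t t' :=
  Set.subset_union_right

theorem commonNeighbors_mono (hRG : R ≤ G) : R.commonNeighbors t t' ⊆ G.commonNeighbors t t' :=
  fun _ hx => ⟨hRG hx.1, hRG hx.2⟩

theorem eq_or_mem_commonNeighbors_of_not_adj (hx : x ∈ suspVerts R t t')
    (hy : y ∈ suspVerts R t t') (hxy : x ≠ y) (hn : ¬R.Adj x y) :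
    s(x, y) = s(t, t') ∨ x ∈ R.commonNeighbors t t' ∧ y ∈ R.commonNeighbors t t' := by
  simp only [suspVerts, Set.mem_union, Set.mem_insert_iff, Set.mem_singleton_iff,
    SimpleGraph.mem_commonNeighbors, Sym2.eq_iff] at *
  grind [R.adj_comm x y]

/-- The graph-theoretic content of a Euclidean 4-circuit: a 4-cycle of edges labelled `2` (the
edges of `R`) none of whose diagonals is an edge of `G`. -/
structure EuclideanQuad (G R : SimpleGraph V) (a b c d : V) : Prop extends FourCycle R a b c d where
  not_adj_ac : ¬G.Adj a c
  not_adj_bd : ¬G.Adj b d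

namespace EuclideanQuad

theorem rotate (h : EuclideanQuad G R a b c d) : EuclideanQuad G R b c d a :=
  ⟨h.toFourCycle.rotate, h.not_adj_bd, fun hca => h.not_adj_ac hca.symm⟩

theorem reflect (h : EuclideanQuad G R a b c d) : EuclideanQuad G R c b a d where
  ab := h.bc.symm
  bc := h.ab.symm
  cd := h.da.symm
  da := h.cd.symm
  ac := h.ac.symm
  bd := h.bd
  not_adj_ac := fun hca => h.not_adj_ac hca.symm
  not_adj_bd := h.not_adj_bd

theorem left_mem (h : EuclideanQuad G R a b c d) : b ∈ R.commonNeighbors a c :=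
  ⟨h.ab, h.bc.symm⟩

theorem right_mem (h : EuclideanQuad G R a b c d) : d ∈ R.commonNeighbors a c :=
  ⟨h.da.symm, h.cd⟩

theorem subset_suspVerts (h : EuclideanQuad G R a b c d) : {a, b, c, d} ⊆ suspVerts R a c := by
  simp [Set.insert_subset_iff, suspVerts, h.left_mem, h.right_mem]

theorem subset_suspVerts_right (h : EuclideanQuad G R a b c d) :
    {a, b, c, d} ⊆ suspVerts R b d :=
  (by grind : ({a, b, c, d} : Set V) ⊆ {b, c, d, a}).trans h.rotate.subset_suspVerts

theorem not_R_adj (h : EuclideanQuad G R a b c d) (hRG : R ≤ G) : ¬R.Adj a c :=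
  fun hac => h.not_adj_ac (hRG hac)

theorem suspVerts_inter (h : EuclideanQuad G R a b c d)
    (hdisj : Disjoint (R.commonNeighbors a c) (R.commonNeighbors b d)) :
    suspVerts R a c ∩ suspVerts R b d = {a, b, c, d} := by
  refine Set.Subset.antisymm (fun x hx => ?_)
    (Set.subset_inter h.subset_suspVerts h.subset_suspVerts_right)
  have hnot : x ∈ R.commonNeighbors a c → x ∉ R.commonNeighbors b d :=
    fun hac => Set.disjoint_left.1 hdisj hac
  simp only [suspVerts, Set.mem_inter_iff, Set.mem_union, Set.mem_insert_iff,
    Set.mem_singleton_iff] at hx ⊢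
  tauto

theorem suspVerts_subset_or (hG : KuratowskiPlanar G) (hRG : R ≤ G) (h : EuclideanQuad G R a b c d)
    (hx : x ∈ R.commonNeighbors a c) (hx' : x ∈ R.commonNeighbors b d) :
    suspVerts R a c ⊆ suspVerts R b d ∨ suspVerts R b d ⊆ suspVerts R a c := by
  by_contra! hcon
  obtain ⟨⟨e, he, he'⟩, f, hf, hf'⟩ := hcon.imp Set.not_subset.1 Set.not_subset.1
  have hmem {u : V} : u ∈ ({a, b, c, d} : Set V) → u ∈ suspVerts R a c ∩ suspVerts R b d :=
    fun hu => ⟨h.subset_suspVerts hu, h.subset_suspVerts_right hu⟩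
  have heQ : e ∉ ({a, b, c, d} : Set V) := fun hu => he' (hmem hu).2
  have hfQ : f ∉ ({a, b, c, d} : Set V) := fun hu => hf' (hmem hu).1
  have hxe : x ≠ e := fun hxe => he' (hxe ▸ commonNeighbors_subset_suspVerts hx')
  have hxf : x ≠ f := fun hxf => hf' (hxf ▸ commonNeighbors_subset_suspVerts hx)
  have hef : e ≠ f := fun hef => he' (hef ▸ hf)
  replace he : e ∈ R.commonNeighbors a c := he.resolve_left (by grind)
  replace hf : f ∈ R.commonNeighbors b d := hf.resolve_left (by grind)
  have hcycle : FourCycle G a x c e := (FourCycle.of_mem_commonNeighbors hx he h.ac hxe).mono hRG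
  have hb : b ∈ ({a, x, c, e}ᶜ : Set V) := by
    have := hx'.1.ne; have := h.ab.ne; have := h.bc.ne; grind
  have hd : d ∈ ({a, x, c, e}ᶜ : Set V) := by
    have := hx'.2.ne; have := h.cd.ne; have := h.da.ne; grind
  have hf₀ : f ∈ ({a, x, c, e}ᶜ : Set V) := by grind
  exact hG.not_walkIn_of_adj_vertex hcycle (commonNeighbors_mono hRG h.left_mem)
    (commonNeighbors_mono hRG h.right_mem) h.bd (hRG hx'.1.symm) (hRG hx'.2.symm)
    (.trans (.of_adj (hRG hf.1) hb hf₀) (.of_adj (hRG hf.2.symm) hf₀ hd))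

/-- The suspension is an octahedron here, and `a, c` is another pair of opposite vertices. -/
theorem suspVerts_eq_of_subset_commonNeighbors (hG : KuratowskiPlanar G) (hRG : R ≤ G)
    (h : EuclideanQuad G R a b c d) (hsub : {a, b, c, d} ⊆ R.commonNeighbors t t')
    (htt' : t ≠ t') : suspVerts R t t' = suspVerts R a c := by
  have hbase := hG.commonNeighbors_subset_of_fourCycle (h.toFourCycle.mono hRG)
    (hsub.trans (commonNeighbors_mono hRG)) htt'
  obtain ⟨ha, hb, hc, hd⟩ := by
    simpa only [Set.insert_subset_iff, Set.singleton_subset_iff] using hsub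
  have hcycle : FourCycle R t b t' d := .of_mem_commonNeighbors hb hd htt' h.bd
  have hsub' : {t, b, t', d} ⊆ R.commonNeighbors a c := by
    simp only [Set.insert_subset_iff, Set.singleton_subset_iff]
    exact ⟨⟨ha.1.symm, hc.1.symm⟩, h.left_mem, ⟨ha.2.symm, hc.2.symm⟩, h.right_mem⟩
  have hbase' := hG.commonNeighbors_subset_of_fourCycle (hcycle.mono hRG)
    (hsub'.trans (commonNeighbors_mono hRG)) h.ac
  rw [suspVerts, suspVerts, hsub.antisymm' ((commonNeighbors_mono hRG).trans hbase),
    hsub'.antisymm' ((commonNeighbors_mono hRG).trans hbase')]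
  grind

theorem suspVerts_eq (hG : KuratowskiPlanar G) (hRG : R ≤ G) (h : EuclideanQuad G R a b c d)
    (hsub : {a, b, c, d} ⊆ suspVerts R t t') (htt' : t ≠ t') :
    ¬G.Adj t t' ∧ (suspVerts R t t' = suspVerts R a c ∨ suspVerts R t t' = suspVerts R b d) := by
  have hsub' := hsub
  simp only [Set.insert_subset_iff, Set.singleton_subset_iff] at hsub'
  obtain ⟨ha, hb, hc, hd⟩ := hsub'
  rcases eq_or_mem_commonNeighbors_of_not_adj ha hc h.ac (h.not_R_adj hRG) with hac | ⟨ha, hc⟩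
  · refine ⟨?_, .inl (suspVerts_congr hac.symm)⟩
    rw [← SimpleGraph.mem_edgeSet, ← hac]
    exact h.not_adj_ac
  rcases eq_or_mem_commonNeighbors_of_not_adj hb hd h.bd (h.rotate.not_R_adj hRG)
    with hbd | ⟨hb, hd⟩
  · refine ⟨?_, .inr (suspVerts_congr hbd.symm)⟩
    rw [← SimpleGraph.mem_edgeSet, ← hbd]
    exact h.not_adj_bd
  have hbase : {a, b, c, d} ⊆ R.commonNeighbors t t' := by
    simp [Set.insert_subset_iff, ha, hb, hc, hd]
  exact ⟨hG.not_adj_of_fourCycle (h.toFourCycle.mono hRG) (hbase.trans (commonNeighbors_mono hRG)),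
    .inl (h.suspVerts_eq_of_subset_commonNeighbors hG hRG hbase htt')⟩

theorem eq_of_subset_suspVerts (hG : KuratowskiPlanar G) (hRG : R ≤ G)
    (h : EuclideanQuad G R a b c d) (h' : EuclideanQuad G R a b c d') (hdd' : d ≠ d')
    (hsub : {a, b, c, d, d'} ⊆ suspVerts R p q) : s(a, c) = s(p, q) := by
  simp only [Set.insert_subset_iff, Set.singleton_subset_iff] at hsub
  obtain ⟨ha, hb, hc, hd, hd'⟩ := hsub
  refine (eq_or_mem_commonNeighbors_of_not_adj ha hc h.ac (h.not_R_adj hRG)).resolve_right ?_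
  rintro ⟨ha, hc⟩
  have hbd := eq_or_mem_commonNeighbors_of_not_adj hb hd h.bd (h.rotate.not_R_adj hRG)
  have hbd' := eq_or_mem_commonNeighbors_of_not_adj hb hd' h'.bd (h'.rotate.not_R_adj hRG)
  have hbase : b ∈ R.commonNeighbors p q ∧ d ∈ R.commonNeighbors p q ∧
      d' ∈ R.commonNeighbors p q := by
    have := R.notMem_commonNeighbors_left p q
    have := R.notMem_commonNeighbors_right p q
    grind [Sym2.eq_iff]
  obtain ⟨hb, hd, hd'⟩ := hbase
  refine hG.not_walkIn_of_opposite (h.toFourCycle.mono hRG)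
    (commonNeighbors_mono hRG h'.right_mem) ⟨hRG hb.1.symm, hRG hd.1.symm⟩ hd'.1.ne'
    (.of_adj (hRG hd'.1.symm) ?_ ?_)
  · have := h'.da.ne; have := h'.cd.ne; have := h'.bd; grind
  · have := ha.1.ne; have := hb.1.ne; have := hc.1.ne; have := hd.1.ne; grind

end EuclideanQuad

theorem FourCycle.eq_of_not_adj (h : FourCycle R a b c d) (hp : p ∈ ({a, b, c, d} : Set V))
    (hq : q ∈ ({a, b, c, d} : Set V)) (hpq : p ≠ q) (hn : ¬R.Adj p q) :
    s(p, q) = s(a, c) ∨ s(p, q) = s(b, d) := by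
  obtain ⟨hab, hbc, hcd, hda, -, -⟩ := h
  simp only [Set.mem_insert_iff, Set.mem_singleton_iff, Sym2.eq_iff] at *
  grind [R.adj_comm p q]

/-- The set `A` lies off the quadrilateral `t, v, t', v'`, is connected to the rest of the graph
only through it, and separates the common neighbours of `t, t'` from those of `v, v'`. -/
structure Separates (G R : SimpleGraph V) (A : Set V) (t v t' v' : V) : Prop where
  disjoint : Disjoint A {t, v, t', v'}
  mem_of_adj : ∀ x ∈ A, ∀ y, G.Adj x y → y ∈ A ∪ {t, v, t', v'}
  left_subset : R.commonNeighbors t t' ⊆ A ∪ {t, v, t', v'}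
  right_disjoint : Disjoint (R.commonNeighbors v v') A

theorem EuclideanQuad.exists_separates (hG : KuratowskiPlanar G) (hRG : R ≤ G)
    (h : EuclideanQuad G R t v t' v')
    (hdisj : Disjoint (R.commonNeighbors t t') (R.commonNeighbors v v')) :
    ∃ A, Separates G R A t v t' v' := by
  refine ⟨{x | ∃ z ∈ R.commonNeighbors t t', WalkIn G {t, v, t', v'}ᶜ z x}, ?_, ?_, ?_, ?_⟩
  · rw [Set.disjoint_left]
    rintro x ⟨z, -, hzx⟩
    exact hzx.symm.left_mem
  · rintro x ⟨z, hz, hzx⟩ y hxy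
    by_cases hy : y ∈ ({t, v, t', v'} : Set V)
    · exact .inr hy
    · exact .inl ⟨z, hz, hzx.trans (.of_adj hxy hzx.symm.left_mem hy)⟩
  · intro z hz
    by_cases hzQ : z ∈ ({t, v, t', v'} : Set V)
    · exact .inr hzQ
    · exact .inl ⟨z, hz, .nil, by simpa using hzQ⟩
  · rw [Set.disjoint_right]
    rintro x ⟨z, hz, hzx⟩ hx
    exact hG.not_walkIn_of_opposite (h.toFourCycle.mono hRG) (commonNeighbors_mono hRG hz)
      (commonNeighbors_mono hRG hx) (fun hzx => Set.disjoint_left.1 hdisj hz (hzx ▸ hx)) hzx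

namespace Separates

variable {A : Set V}

theorem quad_subset (hA : Separates G R A t v t' v') (hRG : R ≤ G) (hQ : FourCycle R t v t' v')
    (h : EuclideanQuad G R p q r s) (hp : p ∈ A) : {p, q, r, s} ⊆ A ∪ {t, v, t', v'} := by
  have hq := hA.mem_of_adj p hp q (hRG h.ab)
  have hs := hA.mem_of_adj p hp s (hRG h.da.symm)
  suffices hr : r ∈ A ∪ {t, v, t', v'} by
    simp only [Set.insert_subset_iff, Set.singleton_subset_iff]
    exact ⟨.inl hp, hq, hr, hs⟩
  rcases hq with hq | hq
  · exact hA.mem_of_adj q hq r (hRG h.bc)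
  rcases hs with hs | hs
  · exact hA.mem_of_adj s hs r (hRG h.cd.symm)
  rcases hQ.eq_of_not_adj hq hs h.bd (h.rotate.not_R_adj hRG) with hqs | hqs
  · exact hA.left_subset (commonNeighbors_congr hqs ▸ h.rotate.left_mem)
  · exact absurd hp (Set.disjoint_left.1 hA.right_disjoint
      (commonNeighbors_congr hqs ▸ h.rotate.right_mem))

theorem quad_subset_of_mem (hA : Separates G R A t v t' v') (hRG : R ≤ G)
    (hQ : FourCycle R t v t' v') (h : EuclideanQuad G R p q r s)
    (hx : x ∈ ({p, q, r, s} : Set V)) (hxA : x ∈ A) :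
    {p, q, r, s} ⊆ A ∪ {t, v, t', v'} := by
  have hcyclic (p q r s : V) : ({p, q, r, s} : Set V) = {q, r, s, p} := by grind
  rcases hx with rfl | rfl | rfl | rfl
  · exact hA.quad_subset hRG hQ h hxA
  · rw [hcyclic p]
    exact hA.quad_subset hRG hQ h.rotate hxA
  · rw [hcyclic p, hcyclic q]
    exact hA.quad_subset hRG hQ h.rotate.rotate hxA
  · rw [← hcyclic x]
    exact hA.quad_subset hRG hQ h.rotate.rotate.rotate hxA

theorem left_suspVerts_subset (hA : Separates G R A t v t' v') :
    suspVerts R t t' ⊆ A ∪ {t, v, t', v'} :=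
  Set.union_subset (by grind) hA.left_subset

theorem disjoint_right_suspVerts (hA : Separates G R A t v t' v') :
    Disjoint (suspVerts R v v') A :=
  Disjoint.union_left (hA.disjoint.symm.mono_left (by grind)) hA.right_disjoint

theorem suspVerts_subset_of_mem (hA : Separates G R A t v t' v') (hRG : R ≤ G)
    (hQ : FourCycle R t v t' v') (h : EuclideanQuad G R p x q y) (hp : p ∈ A) :
    suspVerts R p q ⊆ A ∪ {t, v, t', v'} := by
  rintro w ((rfl | rfl) | hw)
  · exact .inl hp
  · exact hA.quad_subset hRG hQ h hp (by simp)
  · exact hA.mem_of_adj p hp w (hRG hw.1)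

theorem suspVerts_subset_or_disjoint (hA : Separates G R A t v t' v') (hRG : R ≤ G)
    (hQ : FourCycle R t v t' v') (h : EuclideanQuad G R p x q y) :
    suspVerts R p q ⊆ A ∪ {t, v, t', v'} ∨ Disjoint (suspVerts R p q) A := by
  refine or_iff_not_imp_right.2 fun hmeet => ?_
  by_cases hp : p ∈ A
  · exact hA.suspVerts_subset_of_mem hRG hQ h hp
  by_cases hq : q ∈ A
  · exact suspVerts_comm R p q ▸ hA.suspVerts_subset_of_mem hRG hQ h.reflect hq
  obtain ⟨w, hw, hwA⟩ := Set.not_disjoint_iff.1 hmeet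
  replace hw : w ∈ R.commonNeighbors p q := hw.resolve_left (by grind)
  replace hp := (hA.mem_of_adj w hwA p (hRG hw.1.symm)).resolve_left hp
  replace hq := (hA.mem_of_adj w hwA q (hRG hw.2.symm)).resolve_left hq
  rcases hQ.eq_of_not_adj hp hq h.ac (h.not_R_adj hRG) with hpq | hpq
  · rw [suspVerts, commonNeighbors_congr hpq]
    exact Set.union_subset (by grind) hA.left_subset
  · exact absurd hwA (Set.disjoint_left.1 hA.right_disjoint (commonNeighbors_congr hpq ▸ hw))

end Separates

end SuspVerts

/-! ### Right-angled suspensions -/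

section EuclideanCircuits

variable {L : SimplicialComplex ℝ E3} {m : E3 → E3 → ℕ} {F : Finset E3} {v : Fin 4 → E3}
  {W W' : Set E3} {t x y : E3}

/-- The graph of edges of `L` labelled `2`. Both `m u v` and `m v u` are read, so that this is a
graph for every `m`. -/
def rightAngledGraph (L : SimplicialComplex ℝ E3) (m : E3 → E3 → ℕ) : SimpleGraph E3 where
  Adj u v := (skeletonGraph L).Adj u v ∧ m u v = 2 ∧ m v u = 2
  symm := ⟨fun _ _ h => ⟨h.1.symm, h.2.2, h.2.1⟩⟩
  loopless := ⟨fun _ h => h.1.ne rfl⟩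

/-- A Euclidean 4-circuit of the labelled complex, in terms of its graphs of edges. -/
abbrev EuclideanCircuit (L : SimplicialComplex ℝ E3) (m : E3 → E3 → ℕ) (a b c d : E3) : Prop :=
  EuclideanQuad (skeletonGraph L) (rightAngledGraph L m) a b c d

/-- The full subcomplex of `L` on the vertices of `L` lying in `W`. -/
def fullOn (L : SimplicialComplex ℝ E3) (W : Set E3) : Set (Finset E3) :=
  {F | F ∈ L.faces ∧ (F : Set E3) ⊆ W}

/-- The set of vertices of a family of simplices. -/
def vertexSet (S : Set (Finset E3)) : Set E3 :=
  {x | {x} ∈ S}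

/-- The full subcomplex of `L` spanned by `t`, `t'` and their common neighbours along edges labelled
`2`: the only candidate for a maximal RA-suspension with non-adjacent suspension points `t, t'`. -/
def suspComplex (L : SimplicialComplex ℝ E3) (m : E3 → E3 → ℕ) (t t' : E3) : Set (Finset E3) :=
  fullOn L (suspVerts (rightAngledGraph L m) t t')

theorem rightAngledGraph_le : rightAngledGraph L m ≤ skeletonGraph L :=
  fun _ _ h => h.1

theorem skeletonGraph_adj_of_mem (hF : F ∈ L.faces) (hx : x ∈ F) (hy : y ∈ F) (hxy : x ≠ y) :
    (skeletonGraph L).Adj x y :=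
  ⟨hxy, L.down_closed hF (by simp [Finset.insert_subset_iff, hx, hy]) (Finset.insert_nonempty _ _)⟩

theorem singleton_mem_faces_of_adj (h : (skeletonGraph L).Adj x y) : {x} ∈ L.faces :=
  L.down_closed h.2 (by simp) (Finset.singleton_nonempty x)

theorem fullOn_mono (h : W ⊆ W') : fullOn L W ⊆ fullOn L W' :=
  fun _ hF => ⟨hF.1, hF.2.trans h⟩

theorem fullOn_inter : fullOn L W ∩ fullOn L W' = fullOn L (W ∩ W') := by
  ext F
  simp only [fullOn, Set.mem_inter_iff, Set.mem_ofPred_eq, Set.subset_inter_iff]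
  tauto

theorem vertexSet_fullOn (hW : ∀ x ∈ W, {x} ∈ L.faces) : vertexSet (fullOn L W) = W := by
  ext x
  simpa [vertexSet, fullOn] using hW x

theorem suspComplex_comm (L : SimplicialComplex ℝ E3) (m : E3 → E3 → ℕ) (t t' : E3) :
    suspComplex L m t t' = suspComplex L m t' t := by
  rw [suspComplex, suspVerts_comm, suspComplex]

theorem insert_mem_faces (hL : IsLabeledS2 L m) (hflag : MetricFlag L m) (hF : F ∈ L.faces)
    (hcard : F.card ≤ 2) (ht : ∀ x ∈ F, (rightAngledGraph L m).Adj t x) : insert t F ∈ L.faces := by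
  have hpos := (L.nonempty_of_mem_faces hF).card_pos
  obtain hone | htwo : F.card = 1 ∨ F.card = 2 := by omega
  · obtain ⟨x, rfl⟩ := Finset.card_eq_one.1 hone
    exact (ht x (by simp)).1.2
  · obtain ⟨x, y, hxy, rfl⟩ := Finset.card_eq_two.1 htwo
    have htx := ht x (by simp)
    have hty := ht y (by simp)
    rw [hflag t x y htx.ne hxy hty.ne htx.1.2 hF hty.1.2, htx.2.1, hty.2.2]
    have hlabel : (0 : ℝ) < 1 / m x y :=
      one_div_pos.2 (by exact_mod_cast two_pos.trans_le (hL.two_le x y hxy hF))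
    push_cast
    linarith

theorem skeletonGraph_isClique (hF : F ∈ L.faces) : (skeletonGraph L).IsClique F :=
  fun _ hx _ hy hxy => skeletonGraph_adj_of_mem hF hx hy hxy

theorem circuitComplex_eq (v : Fin 4 → E3) :
    circuitComplex v = {F | F.Nonempty ∧ ∃ i, F ⊆ {v i, v (i + 1)}} := by
  ext F
  constructor
  · rintro (⟨i, rfl⟩ | ⟨i, rfl⟩)
    exacts [⟨by simp, i, by simp⟩, ⟨by simp, i, subset_rfl⟩]
  · rintro ⟨hne, i, hF⟩
    rw [← Finset.coe_subset, Finset.coe_pair, hne.to_set.subset_pair_iff_eq] at hF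
    rcases hF with hF | hF | hF
    · exact .inl ⟨i, by exact_mod_cast hF⟩
    · exact .inl ⟨i + 1, by exact_mod_cast hF⟩
    · exact .inr ⟨i, by exact_mod_cast hF⟩

theorem fullOn_eq_circuitComplex (h : EuclideanCircuit L m (v 0) (v 1) (v 2) (v 3)) :
    fullOn L {v 0, v 1, v 2, v 3} = circuitComplex v := by
  rw [circuitComplex_eq]
  ext F
  constructor
  · rintro ⟨hF, hFv⟩
    have hac : v 0 ∈ F → v 2 ∉ F := fun h₀ h₂ =>
      h.not_adj_ac (skeletonGraph_adj_of_mem hF h₀ h₂ h.ac)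
    have hbd : v 1 ∈ F → v 3 ∉ F := fun h₁ h₃ =>
      h.not_adj_bd (skeletonGraph_adj_of_mem hF h₁ h₃ h.bd)
    have hx : ∀ x ∈ F, x = v 0 ∨ x = v 1 ∨ x = v 2 ∨ x = v 3 := by
      simpa [Set.subset_def] using hFv
    refine ⟨L.nonempty_of_mem_faces hF, ?_⟩
    suffices hi : ∃ i, ∀ x ∈ F, x = v i ∨ x = v (i + 1) by simpa [Finset.subset_iff] using hi
    by_cases h₀ : v 0 ∈ F <;> by_cases h₁ : v 1 ∈ F
    · exact ⟨0, fun x hxF => by rcases hx x hxF with rfl | rfl | rfl | rfl <;> simp_all⟩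
    · exact ⟨3, fun x hxF => by rcases hx x hxF with rfl | rfl | rfl | rfl <;> simp_all⟩
    · exact ⟨1, fun x hxF => by rcases hx x hxF with rfl | rfl | rfl | rfl <;> simp_all⟩
    · exact ⟨2, fun x hxF => by rcases hx x hxF with rfl | rfl | rfl | rfl <;> simp_all⟩
  · rintro ⟨hne, i, hF⟩
    have hedge : {v i, v (i + 1)} ∈ L.faces := by
      fin_cases i
      exacts [h.ab.1.2, h.bc.1.2, h.cd.1.2, h.da.1.2]
    refine ⟨L.down_closed hedge hF hne, fun x hx => ?_⟩
    have hxi := hF hx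
    fin_cases i <;> simp at hxi ⊢ <;> tauto

theorem isEuclidean4Circuit_iff (hL : IsLabeledS2 L m) (hflag : MetricFlag L m) :
    IsEuclidean4Circuit L m v ↔ EuclideanCircuit L m (v 0) (v 1) (v 2) (v 3) := by
  constructor
  · rintro ⟨hinj, hface, hlabel, hdiag⟩
    have hadj (i : Fin 4) : (rightAngledGraph L m).Adj (v i) (v (i + 1)) :=
      ⟨⟨hinj.ne (by simp), hface i⟩, hlabel i, hL.symm _ _ ▸ hlabel i⟩
    have hins {p q r : E3} (hpq : (skeletonGraph L).Adj p q) (hp : (rightAngledGraph L m).Adj r p)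
        (hq : (rightAngledGraph L m).Adj r q) : {r, p, q} ∈ L.faces :=
      insert_mem_faces hL hflag hpq.2 Finset.card_le_two (by simp [hp, hq])
    have hrotate (p q r : E3) : ({p, q, r} : Finset E3) = {r, p, q} := by grind
    refine ⟨⟨hadj 0, hadj 1, hadj 2, hadj 3, hinj.ne (by decide), hinj.ne (by decide)⟩,
      fun hac => hdiag (.inl ⟨?_, ?_⟩), fun hbd => hdiag (.inr ⟨?_, ?_⟩)⟩
    · exact Finset.insert_comm (v 1) (v 0) {v 2} ▸ hins hac (hadj 0).symm (hadj 1)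
    · exact hrotate (v 0) (v 2) (v 3) ▸ hins hac (hadj 3) (hadj 2).symm
    · exact Finset.insert_comm (v 2) (v 1) {v 3} ▸ hins hbd (hadj 1).symm (hadj 2)
    · exact hins hbd (hadj 0) (hadj 3).symm
  · intro h
    have hadj (i : Fin 4) : (rightAngledGraph L m).Adj (v i) (v (i + 1)) := by
      fin_cases i
      exacts [h.ab, h.bc, h.cd, h.da]
    refine ⟨fun i j hij => ?_, fun i => (hadj i).1.2, fun i => (hadj i).2.1, ?_⟩
    · have := h.ab.ne; have := h.bc.ne; have := h.cd.ne; have := h.da.ne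
      have := h.ac; have := h.bd
      fin_cases i <;> fin_cases j <;> simp at hij ⊢ <;> grind
    · rintro (⟨hface, -⟩ | ⟨hface, -⟩)
      exacts [h.not_adj_ac (skeletonGraph_adj_of_mem hface (by simp) (by simp) h.ac),
        h.not_adj_bd (skeletonGraph_adj_of_mem hface (by simp) (by simp) h.bd)]

end EuclideanCircuits

section RightAngledSuspensions

variable {L : SimplicialComplex ℝ E3} {m : E3 → E3 → ℕ} {F : Finset E3}
  {S S' T Z Z' : Set (Finset E3)} {a c t t' v : E3}

theorem subset_joinSusp : Z ⊆ joinSusp Z t t' :=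
  fun _ hF => .inl (.inl (.inl hF))

theorem joinSusp_mono (h : Z ⊆ Z') : joinSusp Z t t' ⊆ joinSusp Z' t t' := by
  unfold joinSusp
  gcongr

theorem joinSusp_comm (Z : Set (Finset E3)) (t t' : E3) : joinSusp Z t t' = joinSusp Z t' t := by
  rw [joinSusp, joinSusp, Set.pair_comm, Set.union_right_comm]

theorem mem_of_mem_joinSusp (hF : F ∈ joinSusp Z t t') (ht : t ∉ F) (ht' : t' ∉ F) : F ∈ Z := by
  rcases hF with ((hF | rfl | rfl) | ⟨G, -, rfl⟩) | ⟨G, -, rfl⟩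
  · exact hF
  all_goals simp at ht ht'

theorem isRASuspData_joinSusp (hZ : Z ⊆ L.faces)
    (hdown : ∀ F ∈ Z, ∀ G : Finset E3, G ⊆ F → G.Nonempty → G ∈ Z) (hne : Z.Nonempty)
    (htt' : t ≠ t') (hN : ∀ F ∈ Z, (F : Set E3) ⊆ (rightAngledGraph L m).commonNeighbors t t')
    (hins : ∀ F ∈ Z, insert t F ∈ L.faces ∧ insert t' F ∈ L.faces) :
    IsRASuspData L m (joinSusp Z t t') Z t t' where
  subset := by
    obtain ⟨G, hG⟩ := hne
    rintro F (((hF | rfl | rfl) | ⟨F, hF, rfl⟩) | ⟨F, hF, rfl⟩)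
    · exact hZ hF
    · exact L.down_closed (hins G hG).1 (by simp) (by simp)
    · exact L.down_closed (hins G hG).2 (by simp) (by simp)
    · exact (hins F hF).1
    · exact (hins F hF).2
  zsubset := hZ
  zdown := hdown
  znonempty := hne
  tne := htt'
  t_notin F hF ht := (rightAngledGraph L m).notMem_commonNeighbors_left t t' (hN F hF ht)
  t'_notin F hF ht' := (rightAngledGraph L m).notMem_commonNeighbors_right t t' (hN F hF ht')
  labels v hv := by
    have hvN := hN {v} hv (by simp : v ∈ (({v} : Finset E3) : Set E3))
    exact ⟨hvN.1.2.1, hvN.2.2.1⟩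
  eq := rfl

theorem CoxOrb.IsRASuspData.insert_mem_faces (h : IsRASuspData L m T Z t t') (hF : F ∈ Z) :
    insert t F ∈ L.faces ∧ insert t' F ∈ L.faces :=
  ⟨h.subset (h.eq ▸ .inl (.inr ⟨F, hF, rfl⟩)), h.subset (h.eq ▸ .inr ⟨F, hF, rfl⟩)⟩

theorem CoxOrb.IsRASuspData.subset_commonNeighbors (hL : IsLabeledS2 L m)
    (h : IsRASuspData L m T Z t t') (hF : F ∈ Z) :
    (F : Set E3) ⊆ (rightAngledGraph L m).commonNeighbors t t' := by
  intro v hvF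
  have hv : {v} ∈ Z := h.zdown F hF _ (by simpa using hvF) (by simp)
  have hins := h.insert_mem_faces hv
  have hlabel := h.labels v hv
  exact ⟨⟨⟨fun htv => h.t_notin F hF (htv ▸ hvF), hins.1⟩, hlabel.1, hL.symm t v ▸ hlabel.1⟩,
    ⟨⟨fun htv => h.t'_notin F hF (htv ▸ hvF), hins.2⟩, hlabel.2, hL.symm t' v ▸ hlabel.2⟩⟩

theorem CoxOrb.IsRASuspData.subset_suspComplex (hL : IsLabeledS2 L m)
    (h : IsRASuspData L m T Z t t') : T ⊆ suspComplex L m t t' := by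
  refine fun F hF => ⟨h.subset hF, ?_⟩
  rw [h.eq] at hF
  rcases hF with ((hF | rfl | rfl) | ⟨G, hG, rfl⟩) | ⟨G, hG, rfl⟩
  · exact (h.subset_commonNeighbors hL hF).trans commonNeighbors_subset_suspVerts
  · simp [suspVerts]
  · simp [suspVerts]
  all_goals
    rw [Finset.coe_insert, Set.insert_subset_iff]
    exact ⟨by simp [suspVerts],
      (h.subset_commonNeighbors hL hG).trans commonNeighbors_subset_suspVerts⟩

theorem CoxOrb.IsRASuspData.singleton_mem_of_maximal (hL : IsLabeledS2 L m)
    (h : IsRASuspData L m T Z t t') (hmax : ∀ T', IsRASusp L m T' → T ⊆ T' → T = T')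
    (hv : v ∈ (rightAngledGraph L m).commonNeighbors t t') : {v} ∈ Z := by
  have hcone : IsRASuspData L m (joinSusp (insert {v} Z) t t') (insert {v} Z) t t' := by
    refine isRASuspData_joinSusp ?_ ?_ (Set.insert_nonempty _ _) h.tne ?_ ?_
    · exact Set.insert_subset (singleton_mem_faces_of_adj hv.1.1.symm) h.zsubset
    · rintro F (rfl | hF) G hGF hG
      · exact .inl (hG.subset_singleton_iff.1 hGF)
      · exact .inr (h.zdown F hF G hGF hG)
    · rintro F (rfl | hF)
      · simpa using hv
      · exact h.subset_commonNeighbors hL hF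
    · rintro F (rfl | hF)
      · exact ⟨hv.1.1.2, hv.2.1.2⟩
      · exact h.insert_mem_faces hF
  have heq : T = joinSusp (insert {v} Z) t t' :=
    hmax _ ⟨_, t, t', hcone⟩ (h.eq ▸ joinSusp_mono (Set.subset_insert _ _))
  have hvT : {v} ∈ joinSusp Z t t' := by
    rw [← h.eq, heq]
    exact subset_joinSusp (Set.mem_insert _ _)
  exact mem_of_mem_joinSusp hvT (by simpa using hv.1.1.1) (by simpa using hv.2.1.1)

theorem mem_joinSusp_of_mem (hF : F ∈ suspComplex L m a c) (ha : a ∈ F) (hc : c ∉ F) :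
    F ∈ joinSusp (fullOn L ((rightAngledGraph L m).commonNeighbors a c)) a c := by
  rcases (F.erase a).eq_empty_or_nonempty with hempty | hne
  · refine .inl (.inl (.inr (.inl ?_)))
    rw [← Finset.insert_erase ha, hempty, insert_empty_eq]
  refine .inl (.inr ⟨F.erase a, ⟨L.down_closed hF.1 (F.erase_subset a) hne, fun x hx => ?_⟩,
    Finset.insert_erase ha⟩)
  obtain ⟨hxa, hxF⟩ := Finset.mem_erase.1 (Finset.mem_coe.1 hx)
  refine (hF.2 hxF).resolve_left ?_
  rintro (rfl | rfl)
  exacts [hxa rfl, hc hxF]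

theorem suspComplex_subset_joinSusp (hac : a ≠ c) (hn : ¬(skeletonGraph L).Adj a c) :
    suspComplex L m a c ⊆
      joinSusp (fullOn L ((rightAngledGraph L m).commonNeighbors a c)) a c := by
  intro F hF
  by_cases ha : a ∈ F
  · exact mem_joinSusp_of_mem hF ha fun hc => hn (skeletonGraph_adj_of_mem hF.1 ha hc hac)
  by_cases hc : c ∈ F
  · rw [joinSusp_comm, SimpleGraph.commonNeighbors_symm]
    exact mem_joinSusp_of_mem (suspComplex_comm L m a c ▸ hF) hc ha
  refine subset_joinSusp ⟨hF.1, fun x hx => (hF.2 hx).resolve_left ?_⟩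
  rintro (rfl | rfl)
  exacts [ha hx, hc hx]

theorem CoxOrb.IsInfMaxRASusp.exists_vertexSet_eq (hL : IsLabeledS2 L m)
    (hS : IsInfMaxRASusp L m S) : ∃ t t', t ≠ t' ∧
      vertexSet S = suspVerts (rightAngledGraph L m) t t' ∧
      (¬(skeletonGraph L).Adj t t' → S = suspComplex L m t t') := by
  obtain ⟨⟨Z, t, t', h, -, hfull⟩, hmax⟩ := hS
  have hbase {v : E3} (hv : v ∈ (rightAngledGraph L m).commonNeighbors t t') : {v} ∈ Z :=
    h.singleton_mem_of_maximal hL hmax hv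
  refine ⟨t, t', h.tne, Set.Subset.antisymm (fun v hv => ?_) ?_, fun hn => ?_⟩
  · simpa using (h.subset_suspComplex hL hv).2
  · rw [h.eq]
    rintro v ((rfl | rfl) | hv)
    · exact .inl (.inl (.inr (.inl rfl)))
    · exact .inl (.inl (.inr (.inr rfl)))
    · exact subset_joinSusp (hbase hv)
  · refine (h.subset_suspComplex hL).antisymm ?_
    rw [h.eq]
    refine (suspComplex_subset_joinSusp h.tne hn).trans (joinSusp_mono fun F hF => ?_)
    exact hfull.2 F hF.1 fun v hv => hbase (hF.2 hv)

end RightAngledSuspensions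

section CircuitSuspensions

variable {L : SimplicialComplex ℝ E3} {m : E3 → E3 → ℕ} {F : Finset E3}
  {S S' : Set (Finset E3)} {a b c d d' : E3}

theorem vertexSet_suspComplex (h : EuclideanCircuit L m a b c d) :
    vertexSet (suspComplex L m a c) = suspVerts (rightAngledGraph L m) a c := by
  refine vertexSet_fullOn ?_
  rintro x ((rfl | rfl) | hx)
  exacts [singleton_mem_faces_of_adj h.ab.1, singleton_mem_faces_of_adj h.cd.1,
    singleton_mem_faces_of_adj hx.1.1.symm]

theorem CoxOrb.IsLabeledS2.kuratowskiPlanar (hL : IsLabeledS2 L m) :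
    KuratowskiPlanar (skeletonGraph L) :=
  kuratowskiPlanar_skeletonGraph hL.finite hL.sphere.some

theorem CoxOrb.IsInfMaxRASusp.eq_suspComplex (hL : IsLabeledS2 L m) (hS : IsInfMaxRASusp L m S)
    (h : EuclideanCircuit L m a b c d) (hsub : {a, b, c, d} ⊆ vertexSet S) :
    S = suspComplex L m a c ∨ S = suspComplex L m b d := by
  obtain ⟨t, t', htt', hvert, heq⟩ := hS.exists_vertexSet_eq hL
  obtain ⟨hn, hverts⟩ :=
    h.suspVerts_eq hL.kuratowskiPlanar rightAngledGraph_le (hvert ▸ hsub) htt'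
  rw [heq hn]
  exact hverts.imp (congrArg (fullOn L)) (congrArg (fullOn L))

theorem card_le_two_of_mem_fullOn (hL : IsLabeledS2 L m) (h : EuclideanCircuit L m a b c d)
    (hF : F ∈ fullOn L ((rightAngledGraph L m).commonNeighbors a c)) : F.card ≤ 2 := by
  have hbound {x : E3} (hx : x ∈ (rightAngledGraph L m).commonNeighbors a c) (hxF : x ∉ F) :
      F.card ≤ 2 :=
    hL.kuratowskiPlanar.card_le_two_of_isClique (skeletonGraph_isClique hF.1)
      (hF.2.trans (commonNeighbors_mono rightAngledGraph_le))
      (commonNeighbors_mono rightAngledGraph_le hx) hxF h.ac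
  by_cases hb : b ∈ F
  · exact hbound h.right_mem fun hd => h.not_adj_bd (skeletonGraph_adj_of_mem hF.1 hb hd h.bd)
  · exact hbound h.left_mem hb

theorem isRASuspData_suspComplex (hL : IsLabeledS2 L m) (hflag : MetricFlag L m)
    (h : EuclideanCircuit L m a b c d) :
    IsRASuspData L m (suspComplex L m a c)
      (fullOn L ((rightAngledGraph L m).commonNeighbors a c)) a c := by
  have hjoin := isRASuspData_joinSusp (L := L) (m := m)
    (Z := fullOn L ((rightAngledGraph L m).commonNeighbors a c)) (fun _ hF => hF.1)
    (fun F hF G hGF hG => ⟨L.down_closed hF.1 hGF hG, (Finset.coe_subset.2 hGF).trans hF.2⟩)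
    ⟨{b}, singleton_mem_faces_of_adj h.bc.1, by simpa using h.left_mem⟩ h.ac
    (fun _ hF => hF.2) fun F hF =>
      have hcard := card_le_two_of_mem_fullOn hL h hF
      ⟨insert_mem_faces hL hflag hF.1 hcard fun x hx => (hF.2 hx).1,
        insert_mem_faces hL hflag hF.1 hcard fun x hx => (hF.2 hx).2⟩
  rwa [(hjoin.subset_suspComplex hL).antisymm (suspComplex_subset_joinSusp h.ac h.not_adj_ac)]
    at hjoin

theorem infiniteBase_of_three {Z : Set (Finset E3)} (hb : {b} ∈ Z) (hd : {d} ∈ Z) (hd' : {d'} ∈ Z)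
    (hbd : b ≠ d) (hbd' : b ≠ d') (hdd' : d ≠ d') : InfiniteBase Z := by
  constructor
  · rintro ⟨u, rfl⟩
    simp_all
  · rintro ⟨u, v, -, rfl⟩
    have hor {x : E3} (hx : {x} ∈ ({{u}, {v}, {u, v}} : Set (Finset E3))) : x = u ∨ x = v := by
      rcases hx with hx | hx | hx
      · exact .inl (Finset.singleton_inj.1 hx)
      · exact .inr (Finset.singleton_inj.1 hx)
      · exact .inl (Finset.mem_singleton.1 (hx ▸ Finset.mem_insert_self u {v})).symm
    rcases hor hb with rfl | rfl <;> rcases hor hd with rfl | rfl <;>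
      rcases hor hd' with rfl | rfl <;> simp_all

theorem isInfMaxRASusp_suspComplex (hL : IsLabeledS2 L m) (hflag : MetricFlag L m)
    (h : EuclideanCircuit L m a b c d) (h' : EuclideanCircuit L m a b c d') (hdd' : d ≠ d') :
    IsInfMaxRASusp L m (suspComplex L m a c) := by
  refine ⟨⟨_, a, c, isRASuspData_suspComplex hL hflag h, ?_, ?_⟩, ?_⟩
  · exact infiniteBase_of_three (b := b) (d := d) (d' := d')
      ⟨singleton_mem_faces_of_adj h.bc.1, by simpa using h.left_mem⟩
      ⟨singleton_mem_faces_of_adj h.da.1, by simpa using h.right_mem⟩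
      ⟨singleton_mem_faces_of_adj h'.da.1, by simpa using h'.right_mem⟩ h.bd h'.bd hdd'
  · exact ⟨fun _ hF => hF.1, fun F hF hall => ⟨hF, fun x hx => by simpa using (hall x hx).2⟩⟩
  · rintro T ⟨Z, p, q, hT⟩ hsub
    have hTpq := hT.subset_suspComplex hL
    have hverts : {a, b, c, d, d'} ⊆ suspVerts (rightAngledGraph L m) p q := by
      have hquad : {a, b, c, d, d'} ⊆ suspVerts (rightAngledGraph L m) a c := by
        have := h.subset_suspVerts
        have := h'.subset_suspVerts
        simp_all [Set.insert_subset_iff]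
      rw [← vertexSet_suspComplex h] at hquad
      exact fun x hx => by simpa using (hTpq (hsub (hquad hx))).2
    have hac := h.eq_of_subset_suspVerts hL.kuratowskiPlanar rightAngledGraph_le h' hdd' hverts
    exact hsub.antisymm (by rwa [suspComplex, suspVerts_congr hac])

theorem CoxOrb.IsInfMaxRASusp.eq_of_subset (hS : IsInfMaxRASusp L m S)
    (hS' : IsInfMaxRASusp L m S') (h : S ⊆ S') : S = S' := by
  obtain ⟨⟨Z, t, t', hZ, -⟩, -⟩ := hS'
  exact hS.2 S' ⟨Z, t, t', hZ⟩ h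

theorem suspComplex_eq_or_seifertRel (hL : IsLabeledS2 L m) (hflag : MetricFlag L m)
    (h : EuclideanCircuit L m a b c d) (hac : IsInfMaxRASusp L m (suspComplex L m a c))
    (hbd : IsInfMaxRASusp L m (suspComplex L m b d)) :
    suspComplex L m a c = suspComplex L m b d ∨
      SeifertRel L m (suspComplex L m a c) (suspComplex L m b d) := by
  by_cases hdisj : Disjoint ((rightAngledGraph L m).commonNeighbors a c)
    ((rightAngledGraph L m).commonNeighbors b d)
  · refine .inr ⟨hac, hbd, ![a, b, c, d], (isEuclidean4Circuit_iff hL hflag).2 h, ?_⟩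
    rw [← fullOn_eq_circuitComplex (v := ![a, b, c, d]) h, suspComplex, suspComplex, fullOn_inter,
      h.suspVerts_inter hdisj]
    rfl
  · obtain ⟨x, hx, hx'⟩ := Set.not_disjoint_iff.1 hdisj
    refine .inl ?_
    rcases h.suspVerts_subset_or hL.kuratowskiPlanar rightAngledGraph_le hx hx' with hsub | hsub
    · exact hac.eq_of_subset hbd (fullOn_mono hsub)
    · exact (hbd.eq_of_subset hac (fullOn_mono hsub)).symm

end CircuitSuspensions

/-! ### Seifert subcomplexes -/

section SeifertGraph

variable {L : SimplicialComplex ℝ E3} {m : E3 → E3 → ℕ} {S S' T U : Set (Finset E3)}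
  {a b c d t t' v v' : E3} {A : Set E3}

/-- The graph of RA-suspensions whose connected components are the equivalence classes defining
Seifert subcomplexes. -/
abbrev seifertGraph (L : SimplicialComplex ℝ E3) (m : E3 → E3 → ℕ) :
    SimpleGraph (Set (Finset E3)) :=
  SimpleGraph.fromRel (SeifertRel L m)

theorem CoxOrb.SeifertRel.symm (h : SeifertRel L m S S') : SeifertRel L m S' S := by
  obtain ⟨hS, hS', w, hw, hinter⟩ := h
  exact ⟨hS', hS, w, hw, Set.inter_comm S S' ▸ hinter⟩

theorem seifertGraph_adj : (seifertGraph L m).Adj S S' ↔ S ≠ S' ∧ SeifertRel L m S S' := by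
  rw [SimpleGraph.fromRel_adj, or_iff_left_of_imp SeifertRel.symm]

theorem seifertGraph_reachable_iff :
    (seifertGraph L m).Reachable S S' ↔ Relation.EqvGen (SeifertRel L m) S S' := by
  constructor
  · rintro ⟨w⟩
    induction w with
    | nil => exact .refl _
    | cons hadj _ ih => exact .trans _ _ _ (.rel _ _ (seifertGraph_adj.1 hadj).2) ih
  · intro h
    induction h with
    | rel S S' h =>
      by_cases hne : S = S'
      · exact hne ▸ .refl _
      · exact (seifertGraph_adj.2 ⟨hne, h⟩).reachable
    | refl => exact .refl _
    | symm _ _ _ ih => exact ih.symm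
    | trans _ _ _ _ _ ih ih' => exact ih.trans ih'

theorem CoxOrb.SeifertRel.exists_circuit (hL : IsLabeledS2 L m) (hflag : MetricFlag L m)
    (h : SeifertRel L m S S') : ∃ a b c d, EuclideanCircuit L m a b c d ∧
      vertexSet S ∩ vertexSet S' = {a, b, c, d} ∧
      (S = suspComplex L m a c ∨ S = suspComplex L m b d) ∧
      (S' = suspComplex L m a c ∨ S' = suspComplex L m b d) := by
  obtain ⟨hS, hS', w, hw, hinter⟩ := h
  have hC := (isEuclidean4Circuit_iff hL hflag).1 hw
  have hverts : vertexSet S ∩ vertexSet S' = {w 0, w 1, w 2, w 3} := by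
    have hquad : vertexSet (fullOn L {w 0, w 1, w 2, w 3}) = {w 0, w 1, w 2, w 3} := by
      refine vertexSet_fullOn ?_
      rintro x (rfl | rfl | rfl | rfl)
      exacts [singleton_mem_faces_of_adj hC.ab.1, singleton_mem_faces_of_adj hC.bc.1,
        singleton_mem_faces_of_adj hC.cd.1, singleton_mem_faces_of_adj hC.da.1]
    rw [← hquad, fullOn_eq_circuitComplex hC, ← hinter]
    rfl
  exact ⟨_, _, _, _, hC, hverts, hS.eq_suspComplex hL hC (hverts ▸ Set.inter_subset_left),
    hS'.eq_suspComplex hL hC (hverts ▸ Set.inter_subset_right)⟩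

theorem exists_circuit_of_adj (hL : IsLabeledS2 L m) (hflag : MetricFlag L m)
    (h : (seifertGraph L m).Adj S S') : ∃ t v t' v', EuclideanCircuit L m t v t' v' ∧
      S = suspComplex L m t t' ∧ S' = suspComplex L m v v' ∧
      Disjoint ((rightAngledGraph L m).commonNeighbors t t')
        ((rightAngledGraph L m).commonNeighbors v v') := by
  obtain ⟨hne, hrel⟩ := seifertGraph_adj.1 h
  obtain ⟨a, b, c, d, hC, hverts, hS, hS'⟩ := hrel.exists_circuit hL hflag
  have hdisj (hsub : suspVerts (rightAngledGraph L m) a c ∩ suspVerts (rightAngledGraph L m) b d ⊆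
      {a, b, c, d}) : Disjoint ((rightAngledGraph L m).commonNeighbors a c)
        ((rightAngledGraph L m).commonNeighbors b d) := by
    rw [Set.disjoint_left]
    intro x hx hx'
    rcases hsub ⟨commonNeighbors_subset_suspVerts hx, commonNeighbors_subset_suspVerts hx'⟩
      with rfl | rfl | rfl | rfl
    exacts [hx.1.1.1 rfl, hx'.1.1.1 rfl, hx.2.1.1 rfl, hx'.2.1.1 rfl]
  rcases hS with rfl | rfl <;> rcases hS' with rfl | rfl
  · exact absurd rfl hne
  · rw [vertexSet_suspComplex hC, vertexSet_suspComplex hC.rotate] at hverts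
    exact ⟨a, b, c, d, hC, rfl, rfl, hdisj hverts.subset⟩
  · rw [vertexSet_suspComplex hC, vertexSet_suspComplex hC.rotate, Set.inter_comm] at hverts
    exact ⟨b, a, d, c, hC.reflect.rotate, rfl, rfl, (hdisj hverts.subset).symm⟩
  · exact absurd rfl hne

theorem eq_of_crossing (hL : IsLabeledS2 L m) (hflag : MetricFlag L m)
    (hQ : EuclideanCircuit L m t v t' v')
    (hA : Separates (skeletonGraph L) (rightAngledGraph L m) A t v t' v')
    (hadj : (seifertGraph L m).Adj (suspComplex L m t t') (suspComplex L m v v'))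
    (h : SeifertRel L m S T) (hS : vertexSet S ⊆ A ∪ {t, v, t', v'})
    (hT : Disjoint (vertexSet T) A) : T = suspComplex L m v v' := by
  obtain ⟨a, b, c, d, hC, hverts, -, hTC⟩ := h.exists_circuit hL hflag
  have hsub : {a, b, c, d} ⊆ ({t, v, t', v'} : Set E3) := fun x hx => by
    rw [← hverts] at hx
    exact (hS hx.1).resolve_left (Set.disjoint_left.1 hT hx.2)
  simp only [Set.insert_subset_iff, Set.singleton_subset_iff] at hsub
  obtain ⟨ha, hb, hc, hd⟩ := hsub
  have hT' : T = suspComplex L m t t' ∨ T = suspComplex L m v v' := by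
    rcases hTC with rfl | rfl
    · exact (hQ.eq_of_not_adj ha hc hC.ac (hC.not_R_adj rightAngledGraph_le)).imp
        (congrArg (fullOn L) <| suspVerts_congr ·) (congrArg (fullOn L) <| suspVerts_congr ·)
    · exact (hQ.eq_of_not_adj hb hd hC.bd (hC.rotate.not_R_adj rightAngledGraph_le)).imp
        (congrArg (fullOn L) <| suspVerts_congr ·) (congrArg (fullOn L) <| suspVerts_congr ·)
  refine hT'.resolve_left ?_
  rintro rfl
  obtain ⟨hne, hrel⟩ := seifertGraph_adj.1 hadj
  rw [vertexSet_suspComplex hQ] at hT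
  refine hne (hrel.1.eq_of_subset hrel.2.1 (fullOn_mono fun x hx => ?_))
  exact hQ.subset_suspVerts_right
    ((hA.left_suspVerts_subset hx).resolve_left (Set.disjoint_left.1 hT hx))

theorem vertexSet_subset_of_mem_support (hL : IsLabeledS2 L m) (hflag : MetricFlag L m)
    (hQ : EuclideanCircuit L m t v t' v')
    (hA : Separates (skeletonGraph L) (rightAngledGraph L m) A t v t' v')
    (hadj : (seifertGraph L m).Adj (suspComplex L m t t') (suspComplex L m v v'))
    (w : (seifertGraph L m).Walk S T) (hw : suspComplex L m v v' ∉ w.support)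
    (hS : vertexSet S ⊆ A ∪ {t, v, t', v'}) (hU : U ∈ w.support) :
    vertexSet U ⊆ A ∪ {t, v, t', v'} := by
  induction w with
  | nil =>
    rw [SimpleGraph.Walk.support_nil, List.mem_singleton] at hU
    rwa [hU]
  | @cons S S' T hSS' w ih =>
    rw [SimpleGraph.Walk.support_cons, List.mem_cons] at hw hU
    push Not at hw
    rcases hU with rfl | hU
    · exact hS
    refine ih hw.2 ?_ hU
    obtain ⟨p, x, q, y, hC, hS', -, -⟩ := exists_circuit_of_adj hL hflag hSS'.symm
    have hverts : vertexSet S' = suspVerts (rightAngledGraph L m) p q :=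
      hS' ▸ vertexSet_suspComplex hC
    rw [hverts]
    refine (hA.suspVerts_subset_or_disjoint rightAngledGraph_le hQ.toFourCycle hC).resolve_right
      fun hdisj => ?_
    have heq := eq_of_crossing hL hflag hQ hA hadj (seifertGraph_adj.1 hSS').2 hS (hverts ▸ hdisj)
    exact hw.2 (heq ▸ w.start_mem_support)

theorem exists_mem_support_subset_vertexSet (hL : IsLabeledS2 L m) (hflag : MetricFlag L m)
    (h : EuclideanCircuit L m a b c d) (w : (seifertGraph L m).Walk S T)
    (hw : ∀ x ∈ ({a, b, c, d} : Set E3), ∃ U ∈ w.support, x ∈ vertexSet U) :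
    ∃ U ∈ w.support, {a, b, c, d} ⊆ vertexSet U := by
  induction w with
  | nil =>
    refine ⟨_, SimpleGraph.Walk.start_mem_support _, fun x hx => ?_⟩
    simpa using hw x hx
  | @cons S' S T hadj w ih =>
    simp only [SimpleGraph.Walk.support_cons, List.mem_cons, exists_eq_or_imp] at hw ⊢
    by_cases hS' : S' ∈ w.support
    · refine .inr (ih fun x hx => ?_)
      exact (hw x hx).elim (fun hxS' => ⟨S', hS', hxS'⟩) id
    obtain ⟨t, v, t', v', hQ, rfl, rfl, hdisj⟩ := exists_circuit_of_adj hL hflag hadj.symm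
    obtain ⟨A, hA⟩ := hQ.exists_separates hL.kuratowskiPlanar rightAngledGraph_le hdisj
    have hside {U : Set (Finset E3)} (hU : U ∈ w.support) :
        vertexSet U ⊆ A ∪ {t, v, t', v'} :=
      vertexSet_subset_of_mem_support hL hflag hQ hA hadj.symm w hS'
        (vertexSet_suspComplex hQ ▸ hA.left_suspVerts_subset) hU
    rw [vertexSet_suspComplex hQ.rotate] at hw ⊢
    by_cases hmeet : ∃ x ∈ ({a, b, c, d} : Set E3), x ∈ A
    · obtain ⟨y, hy, hyA⟩ := hmeet
      refine .inr (ih fun x hx => ?_)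
      rcases hA.quad_subset_of_mem rightAngledGraph_le hQ.toFourCycle h hy hyA hx with hxA | hxQ
      · exact (hw x hx).resolve_left fun hxS' =>
          Set.disjoint_left.1 hA.disjoint_right_suspVerts hxS' hxA
      · exact ⟨_, w.start_mem_support, vertexSet_suspComplex hQ ▸ hQ.subset_suspVerts hxQ⟩
    · refine .inl fun x hx => (hw x hx).elim id ?_
      rintro ⟨U, hU, hxU⟩
      exact hQ.subset_suspVerts_right
        ((hside hU hxU).resolve_left fun hxA => hmeet ⟨x, hx, hxA⟩)

end SeifertGraph

theorem exists_walk_forall_mem_support {V : Type*} {G : SimpleGraph V} {u : V} {s : Set V}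
    (hs : s.Finite) (h : ∀ x ∈ s, G.Reachable u x) :
    ∃ v, ∃ w : G.Walk u v, ∀ x ∈ s, x ∈ w.support := by
  induction s, hs using Set.Finite.induction_on with
  | empty => exact ⟨u, .nil, by simp⟩
  | @insert y s _ _ ih =>
    obtain ⟨v, w, hw⟩ := ih fun x hx => h x (.inr hx)
    obtain ⟨p⟩ := h y (.inl rfl)
    refine ⟨y, w.append (w.reverse.append p), ?_⟩
    rintro x (rfl | hx) <;> rw [SimpleGraph.Walk.mem_support_append_iff]
    · exact .inr (SimpleGraph.Walk.end_mem_support _)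
    · exact .inl (hw x hx)

theorem exists_eq_pair_of_mem {V : Type*} [DecidableEq V] {v : Fin 4 → V} {e : Finset V}
    {b : V} (he : ∃ i, e = {v i, v (i + 1)}) (hb : b ∈ e) : ∃ a, e = {a, b} := by
  obtain ⟨i, rfl⟩ := he
  rcases Finset.mem_insert.1 hb with rfl | hb
  · exact ⟨_, Finset.pair_comm _ _⟩
  · exact ⟨v i, by rw [Finset.mem_singleton.1 hb]⟩

theorem eq_or_eq_of_pair_eq {V : Type*} [DecidableEq V] {v : Fin 4 → V} {a : V}
    (hv : Function.Injective v) {k : Fin 4}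
    (h : ∃ i, ({a, v k} : Finset V) = {v i, v (i + 1)}) : a = v (k + 1) ∨ a = v (k + 3) := by
  obtain ⟨i, h⟩ := h
  rw [← Finset.coe_inj, Finset.coe_pair, Finset.coe_pair, Set.pair_eq_pair_iff] at h
  rcases h with ⟨rfl, hk⟩ | ⟨rfl, hk⟩
  · obtain rfl := hv hk
    exact .inr (by rw [add_assoc]; simp)
  · obtain rfl := hv hk
    exact .inl rfl

section SeifertSubcomplexes

variable {L : SimplicialComplex ℝ E3} {m : E3 → E3 → ℕ} {S S₀ T T₀ : Set (Finset E3)}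
  {a b c d d' : E3} {v : Fin 4 → E3}

/-- The Seifert subcomplex containing the RA-suspension `S₀`. -/
def seifertSubcomplex (L : SimplicialComplex ℝ E3) (m : E3 → E3 → ℕ) (S₀ : Set (Finset E3)) :
    Set (Finset E3) :=
  ⋃₀ {S | IsInfMaxRASusp L m S ∧ Relation.EqvGen (SeifertRel L m) S₀ S}

theorem seifertSubcomplex_congr (h : Relation.EqvGen (SeifertRel L m) S₀ T₀) :
    seifertSubcomplex L m S₀ = seifertSubcomplex L m T₀ := by
  have heqv (S : Set (Finset E3)) : Relation.EqvGen (SeifertRel L m) S₀ S ↔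
      Relation.EqvGen (SeifertRel L m) T₀ S := ⟨.trans _ _ _ (.symm _ _ h), .trans _ _ _ h⟩
  simp only [seifertSubcomplex, heqv]

theorem isInfMaxRASusp_iff_of_eqvGen (h : Relation.EqvGen (SeifertRel L m) S T) :
    IsInfMaxRASusp L m S ↔ IsInfMaxRASusp L m T := by
  induction h with
  | rel _ _ h => exact iff_of_true h.1 h.2.1
  | refl => exact Iff.rfl
  | symm _ _ _ ih => exact ih.symm
  | trans _ _ _ _ _ ih ih' => exact ih.trans ih'

theorem exists_eqvGen_eq_suspComplex (hL : IsLabeledS2 L m) (hflag : MetricFlag L m)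
    (hS₀ : IsInfMaxRASusp L m S₀) (h : EuclideanCircuit L m a b c d)
    (hsub : {a, b, c, d} ⊆ vertexSet (seifertSubcomplex L m S₀)) :
    ∃ S, IsInfMaxRASusp L m S ∧ Relation.EqvGen (SeifertRel L m) S₀ S ∧
      (S = suspComplex L m a c ∨ S = suspComplex L m b d) := by
  have hmember (x : ({a, b, c, d} : Set E3)) :
      ∃ S, (seifertGraph L m).Reachable S₀ S ∧ x.1 ∈ vertexSet S := by
    obtain ⟨S, ⟨-, hS⟩, hxS⟩ := hsub x.2
    exact ⟨S, seifertGraph_reachable_iff.2 hS, hxS⟩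
  choose U hU hxU using hmember
  obtain ⟨_, w, hw⟩ :=
    exists_walk_forall_mem_support (Set.finite_range U) (Set.forall_mem_range.2 hU)
  obtain ⟨S, hSw, hS⟩ := exists_mem_support_subset_vertexSet hL hflag h w
    fun x hx => ⟨U ⟨x, hx⟩, hw _ (Set.mem_range_self _), hxU ⟨x, hx⟩⟩
  have hS₀S : Relation.EqvGen (SeifertRel L m) S₀ S := by
    classical exact seifertGraph_reachable_iff.1 ⟨w.takeUntil S hSw⟩
  have hSmax := (isInfMaxRASusp_iff_of_eqvGen hS₀S).1 hS₀
  exact ⟨S, hSmax, hS₀S, hSmax.eq_suspComplex hL h hS⟩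

theorem eqvGen_of_eq_suspComplex (hL : IsLabeledS2 L m) (hflag : MetricFlag L m)
    (h : EuclideanCircuit L m a b c d) (hS : IsInfMaxRASusp L m S) (hT : IsInfMaxRASusp L m T)
    (hSC : S = suspComplex L m a c ∨ S = suspComplex L m b d)
    (hTC : T = suspComplex L m a c ∨ T = suspComplex L m b d) :
    Relation.EqvGen (SeifertRel L m) S T := by
  have hrel (hac : IsInfMaxRASusp L m (suspComplex L m a c))
      (hbd : IsInfMaxRASusp L m (suspComplex L m b d)) :
      Relation.EqvGen (SeifertRel L m) (suspComplex L m a c) (suspComplex L m b d) :=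
    (suspComplex_eq_or_seifertRel hL hflag h hac hbd).elim (fun heq => heq ▸ .refl _) (.rel _ _)
  rcases hSC with rfl | rfl <;> rcases hTC with rfl | rfl
  exacts [.refl _, hrel hS hT, .symm _ _ (hrel hT hS), .refl _]

theorem eqvGen_of_shared_edges (hL : IsLabeledS2 L m) (hflag : MetricFlag L m)
    (h : EuclideanCircuit L m a b c d) (h' : EuclideanCircuit L m a b c d')
    (hS : IsInfMaxRASusp L m S) (hT : IsInfMaxRASusp L m T)
    (hSC : S = suspComplex L m a c ∨ S = suspComplex L m b d)
    (hTC : T = suspComplex L m a c ∨ T = suspComplex L m b d') :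
    Relation.EqvGen (SeifertRel L m) S T := by
  by_cases hdd' : d = d'
  · subst hdd'
    exact eqvGen_of_eq_suspComplex hL hflag h hS hT hSC hTC
  · have hac := isInfMaxRASusp_suspComplex hL hflag h h' hdd'
    exact .trans _ _ _ (eqvGen_of_eq_suspComplex hL hflag h hS hac hSC (.inl rfl))
      (eqvGen_of_eq_suspComplex hL hflag h' hac hT (.inl rfl) hTC)

theorem exists_circuit_of_edges (hL : IsLabeledS2 L m) (hflag : MetricFlag L m)
    (hv : IsEuclidean4Circuit L m v) (hac : a ≠ c)
    (hab : ∃ i, ({a, b} : Finset E3) = {v i, v (i + 1)})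
    (hcb : ∃ i, ({c, b} : Finset E3) = {v i, v (i + 1)}) :
    ∃ d, EuclideanCircuit L m a b c d ∧ {a, b, c, d} ⊆ Set.range v := by
  obtain ⟨k, rfl⟩ : ∃ k, b = v k := by
    obtain ⟨i, hi⟩ := hab
    have hb : b ∈ ({v i, v (i + 1)} : Finset E3) := hi ▸ by simp
    rcases Finset.mem_insert.1 hb with hb | hb
    exacts [⟨_, hb⟩, ⟨_, Finset.mem_singleton.1 hb⟩]
  have h₀ := (isEuclidean4Circuit_iff hL hflag).1 hv
  have hrotate : EuclideanCircuit L m (v (k + 3)) (v k) (v (k + 1)) (v (k + 2)) := by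
    fin_cases k
    exacts [h₀.rotate.rotate.rotate, h₀, h₀.rotate, h₀.rotate.rotate]
  refine ⟨v (k + 2), ?_⟩
  rcases eq_or_eq_of_pair_eq hv.1 hab with rfl | rfl <;>
    rcases eq_or_eq_of_pair_eq hv.1 hcb with rfl | rfl
  · exact absurd rfl hac
  · exact ⟨hrotate.reflect, by simp [Set.insert_subset_iff]⟩
  · exact ⟨hrotate, by simp [Set.insert_subset_iff]⟩
  · exact absurd rfl hac

theorem range_subset_vertexSet {D : Set (Finset E3)} (h : circuitComplex v ⊆ D) :
    Set.range v ⊆ vertexSet D := by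
  rintro _ ⟨i, rfl⟩
  exact h (.inl ⟨i, rfl⟩)

end SeifertSubcomplexes

theorem seifert_eq_of_shared_boundary_edges_general
    (L : SimplicialComplex ℝ E3) (m : E3 → E3 → ℕ)
    (hL : IsLabeledS2 L m) (hflag : MetricFlag L m)
    (D₁ D₂ : Set (Finset E3))
    (h₁ : IsSeifertSubcomplex L m D₁) (h₂ : IsSeifertSubcomplex L m D₂)
    (v₁ v₂ : Fin 4 → E3)
    (hv₁ : IsEuclidean4Circuit L m v₁) (hv₂ : IsEuclidean4Circuit L m v₂)
    (hsub₁ : circuitComplex v₁ ⊆ D₁) (hsub₂ : circuitComplex v₂ ⊆ D₂)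
    (e₁ e₂ : Finset E3) (hne : e₁ ≠ e₂)
    (he₁C₁ : ∃ i : Fin 4, e₁ = ({v₁ i, v₁ (i + 1)} : Finset E3))
    (he₁C₂ : ∃ i : Fin 4, e₁ = ({v₂ i, v₂ (i + 1)} : Finset E3))
    (he₂C₁ : ∃ i : Fin 4, e₂ = ({v₁ i, v₁ (i + 1)} : Finset E3))
    (he₂C₂ : ∃ i : Fin 4, e₂ = ({v₂ i, v₂ (i + 1)} : Finset E3))
    (hshare : (e₁ ∩ e₂).Nonempty) :
    D₁ = D₂ := by
  obtain ⟨S₀, hS₀, rfl⟩ := h₁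
  obtain ⟨T₀, hT₀, rfl⟩ := h₂
  obtain ⟨b, hb⟩ := hshare
  obtain ⟨a, rfl⟩ := exists_eq_pair_of_mem he₁C₁ (Finset.mem_inter.1 hb).1
  obtain ⟨c, rfl⟩ := exists_eq_pair_of_mem he₂C₁ (Finset.mem_inter.1 hb).2
  have hac : a ≠ c := fun hac => hne (hac ▸ rfl)
  obtain ⟨d, hC, hCv⟩ := exists_circuit_of_edges hL hflag hv₁ hac he₁C₁ he₂C₁
  obtain ⟨d', hC', hCv'⟩ := exists_circuit_of_edges hL hflag hv₂ hac he₁C₂ he₂C₂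
  obtain ⟨S, hS, hS₀S, hSC⟩ := exists_eqvGen_eq_suspComplex hL hflag hS₀ hC
    (hCv.trans (range_subset_vertexSet hsub₁))
  obtain ⟨T, hT, hT₀T, hTC⟩ := exists_eqvGen_eq_suspComplex hL hflag hT₀ hC'
    (hCv'.trans (range_subset_vertexSet hsub₂))
  have hST := eqvGen_of_shared_edges hL hflag hC hC' hS hT hSC hTC
  exact seifertSubcomplex_congr (.trans _ _ _ (.trans _ _ _ hS₀S hST) (.symm _ _ hT₀T))

/-- Let `D₁, D₂` be Seifert subcomplexes of a metric flag labeled triangulation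
of the 2-sphere, and let `C₁ ⊆ D₁`, `C₂ ⊆ D₂` be Euclidean 4-circuits each of
whose edges lies in at most one 2-simplex of the containing Seifert subcomplex.
If `C₁` and `C₂` have two edges in common which share a vertex, then
`D₁ = D₂`. -/
theorem seifert_eq_of_shared_boundary_edges
    (L : SimplicialComplex ℝ E3) (m : E3 → E3 → ℕ)
    (hL : IsLabeledS2 L m) (hflag : MetricFlag L m)
    (D₁ D₂ : Set (Finset E3))
    (h₁ : IsSeifertSubcomplex L m D₁) (h₂ : IsSeifertSubcomplex L m D₂)
    (v₁ v₂ : Fin 4 → E3)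
    (hv₁ : IsEuclidean4Circuit L m v₁) (hv₂ : IsEuclidean4Circuit L m v₂)
    (hsub₁ : circuitComplex v₁ ⊆ D₁) (hsub₂ : circuitComplex v₂ ⊆ D₂)
    (hbd₁ : ∀ i : Fin 4, {G : Finset E3 | G ∈ L.faces ∧ G.card = 3 ∧
      ({v₁ i, v₁ (i + 1)} : Finset E3) ⊆ G ∧ G ∈ D₁}.Subsingleton)
    (hbd₂ : ∀ i : Fin 4, {G : Finset E3 | G ∈ L.faces ∧ G.card = 3 ∧
      ({v₂ i, v₂ (i + 1)} : Finset E3) ⊆ G ∧ G ∈ D₂}.Subsingleton)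
    (e₁ e₂ : Finset E3) (hne : e₁ ≠ e₂)
    (he₁C₁ : ∃ i : Fin 4, e₁ = ({v₁ i, v₁ (i + 1)} : Finset E3))
    (he₁C₂ : ∃ i : Fin 4, e₁ = ({v₂ i, v₂ (i + 1)} : Finset E3))
    (he₂C₁ : ∃ i : Fin 4, e₂ = ({v₁ i, v₁ (i + 1)} : Finset E3))
    (he₂C₂ : ∃ i : Fin 4, e₂ = ({v₂ i, v₂ (i + 1)} : Finset E3))
    (hshare : (e₁ ∩ e₂).Nonempty) :
    D₁ = D₂ := by
  exact seifert_eq_of_shared_boundary_edges_general L m hL hflag D₁ D₂ h₁ h₂ v₁ v₂ hv₁ hv₂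
    hsub₁ hsub₂ e₁ e₂ hne he₁C₁ he₁C₂ he₂C₁ he₂C₂ hshare
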